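/- arXiv:1109.5199 — 2 statements merged into one kernel-verified Lean document; each statement's English description precedes it below -/
import Mathlib

section
/- Suppose 1/s₁ + 1/s₂ > 1. Then as a → 0⁺ the absolutely continuous invariant probability measures μ_a of W_a converge *-weakly to the Dirac measure δ_{1/2} at the point 1/2; that is, for every continuous function g : [0,1] → ℝ, ∫ g dμ_a → g(1/2) as a → 0⁺. -/
open MeasureTheory Filter Topology

/-- The W-like map `W_a` with parameters `s₁ s₂ p q r` and perturbation `a`. -/
noncomputable def Wmap (s₁ s₂ p q r a : ℝ) (x : ℝ) : ℝ :=
  if x < 1/2 - (1/2 + r*a)/(s₁ + p*a) then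
    1 - (2*(s₁ + p*a)/(s₁ - 1 + p*a - 2*r*a)) * x
  else if x < 1/2 then
    (s₁ + p*a)*(x - 1/2) + 1/2 + r*a
  else if x < 1/2 + (1/2 + r*a)/(s₂ + q*a) then
    -(s₂ + q*a)*(x - 1/2) + 1/2 + r*a
  else
    1 + (2*(s₂ + q*a)/(s₂ - 1 + q*a - 2*r*a)) * (x - 1)

/-!
Write `peakMap s t ε` for the W-shaped map with inner slopes `s`, `-t` and peak value `1/2 + ε`. Its
second branch has the repelling fixed point `u = 1/2 - ε/(s-1)`, whose preimage under the third
branch is `v = 1/2 + εs/((s-1)t)`. The interval `(u, v)` shrinks to `1/2` as `ε → 0`, and the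
condition `1/s + 1/t > 1` says exactly that the peak `1/2 + ε` lies below `v`, so that `(u, v)` is
forward invariant.

If `S` is forward invariant and of finite length `|S|`, counting lengths branch by branch gives
`|S ∩ (-∞, u]| ≤ u |S|` and `|S ∩ [v, ∞)| ≤ (1 - v) |S|`. Hence if `S` misses `(u, v)`, then
`|S| ≤ (1 - (v - u)) |S|`, and `S` is null. So almost every orbit enters `(u, v)` and stays there,
and by Poincaré recurrence every absolutely continuous invariant probability measure is carried
by `(u, v)`.
-/

section General

variable {ι X E : Type*}

/-- `μ` is an absolutely continuous invariant probability measure (acim) of `T`, carried by `I`. -/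
structure IsAcimOn (T : ℝ → ℝ) (I : Set ℝ) (μ : Measure ℝ) : Prop where
  isProbabilityMeasure : IsProbabilityMeasure μ
  absolutelyContinuous : μ ≪ volume
  ae_mem : ∀ᵐ x ∂μ, x ∈ I
  measurePreserving : MeasurePreserving T μ μ

lemma ae_mem_of_conservative_of_ae_exists_iterate_mem [MeasurableSpace X] {T : X → X}
    {μ : Measure X} {K : Set X} (hT : Conservative T μ) (hK : NullMeasurableSet K μ)
    (hmaps : Set.MapsTo T K K) (hhit : ∀ᵐ x ∂μ, ∃ n, T^[n] x ∈ K) : ∀ᵐ x ∂μ, x ∈ K := by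
  filter_upwards [hhit, hT.ae_mem_imp_frequently_image_mem hK.compl] with x ⟨n, hn⟩ hrec
  by_contra hx
  obtain ⟨m, hnm, hm⟩ := frequently_atTop.1 (hrec hx) n
  obtain ⟨k, rfl⟩ := Nat.exists_eq_add_of_le' hnm
  rw [Function.iterate_add_apply] at hm
  exact hm (hmaps.iterate k hn)

lemma volumeReal_le_of_mapsTo_of_affine {f : ℝ → ℝ} {A B : Set ℝ} {m b : ℝ} (hm : m ≠ 0)
    (hA : volume A ≠ ⊤) (hf : ∀ x ∈ B, f x = m * x + b) (hmaps : Set.MapsTo f B A) :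
    volume.real B ≤ |m⁻¹| * volume.real A := by
  have hsub : B ⊆ (m * ·) ⁻¹' ((· + b) ⁻¹' A) := fun x hx => by
    simpa only [Set.mem_preimage, ← hf x hx] using hmaps hx
  have hvol : volume ((m * ·) ⁻¹' ((· + b) ⁻¹' A)) = ENNReal.ofReal |m⁻¹| * volume A := by
    rw [Real.volume_preimage_mul_left hm, measure_preimage_add_right]
  calc volume.real B
      ≤ volume.real ((m * ·) ⁻¹' ((· + b) ⁻¹' A)) :=
        measureReal_mono hsub (hvol ▸ ENNReal.mul_ne_top ENNReal.ofReal_ne_top hA)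
    _ = |m⁻¹| * volume.real A := by
        rw [measureReal_def, hvol, ENNReal.toReal_mul, ENNReal.toReal_ofReal (abs_nonneg _),
          measureReal_def]

lemma measureReal_inter_le_add_of_subset_union [MeasurableSpace X] {μ : Measure X} {S A B C : Set X}
    (hS : μ S ≠ ⊤) (hABC : A ⊆ B ∪ C) :
    μ.real (S ∩ A) ≤ μ.real (S ∩ B) + μ.real (S ∩ C) := by
  have hsub : S ∩ A ⊆ S ∩ B ∪ S ∩ C := by
    rw [← Set.inter_union_distrib_left]
    exact Set.inter_subset_inter_right S hABC
  have hfin : μ (S ∩ B ∪ S ∩ C) ≠ ⊤ :=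
    measure_ne_top_of_subset (Set.union_subset Set.inter_subset_left Set.inter_subset_left) hS
  exact (measureReal_mono hsub hfin).trans (measureReal_union_le _ _)

lemma tendsto_integral_of_eventually_ae_mem_nhds [TopologicalSpace X] [MeasurableSpace X]
    [NormedAddCommGroup E] [NormedSpace ℝ E] [CompleteSpace E] {l : Filter ι} {μ : ι → Measure X}
    {x₀ : X} {g : X → E} (hprob : ∀ᶠ i in l, IsProbabilityMeasure (μ i))
    (hμ : ∀ U ∈ 𝓝 x₀, ∀ᶠ i in l, ∀ᵐ x ∂μ i, x ∈ U)
    (hgm : ∀ᶠ i in l, AEStronglyMeasurable g (μ i)) (hg : ContinuousAt g x₀) :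
    Tendsto (fun i => ∫ x, g x ∂μ i) l (𝓝 (g x₀)) := by
  refine Metric.nhds_basis_closedBall.tendsto_right_iff.2 fun δ hδ => ?_
  filter_upwards [hprob, hμ _ (hg (Metric.closedBall_mem_nhds _ hδ)), hgm] with i _ hball hgi
  have hbound : ∀ᵐ x ∂μ i, ‖g x‖ ≤ ‖g x₀‖ + δ := by
    filter_upwards [hball] with x hx
    exact norm_le_of_mem_closedBall hx
  exact (convex_closedBall _ _).integral_mem Metric.isClosed_closedBall hball
    (Integrable.of_bound hgi _ hbound)

lemma tendsto_const_add_mul_nhdsGT_zero (s p : ℝ) :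
    Tendsto (fun a => s + p * a) (𝓝[>] 0) (𝓝 s) := by
  have hcont : Continuous fun a => s + p * a := by fun_prop
  exact (hcont.tendsto' 0 s (by simp)).mono_left nhdsWithin_le_nhds

lemma tendsto_const_mul_nhdsGT_zero {r : ℝ} (hr : 0 < r) :
    Tendsto (fun a => r * a) (𝓝[>] 0) (𝓝[>] 0) :=
  tendsto_iff_comap.2 (comap_mulLeft_nhdsGT_zero hr).ge

lemma mul_lt_add_of_one_lt_one_div_add_one_div {s t : ℝ} (hs : 0 < s) (ht : 0 < t)
    (h : 1 < 1 / s + 1 / t) : s * t < s + t := by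
  rw [div_add_div _ _ hs.ne' ht.ne', one_lt_div (mul_pos hs ht)] at h
  linarith

end General

namespace peakMap

/-- The zero of `peakMap s t ε` at which its first two branches meet. -/
noncomputable def leftBreak (s ε : ℝ) : ℝ := 1 / 2 - (1 / 2 + ε) / s

/-- The zero of `peakMap s t ε` at which its last two branches meet. -/
noncomputable def rightBreak (t ε : ℝ) : ℝ := 1 / 2 + (1 / 2 + ε) / t

end peakMap

/-- The W-shaped map on `[0, 1]` with inner slopes `s`, `-t` and peak value `1/2 + ε` at `1/2`;
`Wmap s₁ s₂ p q r a` is `peakMap (s₁ + p * a) (s₂ + q * a) (r * a)`. -/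
noncomputable def peakMap (s t ε x : ℝ) : ℝ :=
  if x < peakMap.leftBreak s ε then 1 - 2 * s / (s - 1 - 2 * ε) * x
  else if x < 1 / 2 then s * (x - 1 / 2) + 1 / 2 + ε
  else if x < peakMap.rightBreak t ε then -t * (x - 1 / 2) + 1 / 2 + ε
  else 1 + 2 * t / (t - 1 - 2 * ε) * (x - 1)

lemma Wmap_eq_peakMap (s₁ s₂ p q r a : ℝ) :
    Wmap s₁ s₂ p q r a = peakMap (s₁ + p * a) (s₂ + q * a) (r * a) := by
  funext x
  have hden (s p : ℝ) : s - 1 + p * a - 2 * r * a = s + p * a - 1 - 2 * (r * a) := by ring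
  rw [Wmap, peakMap, hden, hden]
  rfl

namespace peakMap

/-- The fixed point of the second branch of `peakMap s t ε`. -/
noncomputable def trapLeft (s ε : ℝ) : ℝ := 1 / 2 - ε / (s - 1)

/-- The preimage of `trapLeft s ε` under the third branch of `peakMap s t ε`. -/
noncomputable def trapRight (s t ε : ℝ) : ℝ := 1 / 2 + ε * s / ((s - 1) * t)

/-- The interval that absorbs almost every orbit of `peakMap s t ε` when `1/s + 1/t > 1`. -/
def trap (s t ε : ℝ) : Set ℝ := Set.Ioo (trapLeft s ε) (trapRight s t ε)

variable {s t ε x : ℝ}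

protected lemma measurable (s t ε : ℝ) : Measurable (peakMap s t ε) := by
  unfold peakMap
  refine Measurable.ite measurableSet_Iio (by fun_prop) ?_
  refine Measurable.ite measurableSet_Iio (by fun_prop) ?_
  exact Measurable.ite measurableSet_Iio (by fun_prop) (by fun_prop)

lemma leftBreak_eq_div (hs : s ≠ 0) : leftBreak s ε = (s - 1 - 2 * ε) / (2 * s) := by
  unfold leftBreak
  field_simp
  ring

lemma one_sub_rightBreak_eq_div (ht : t ≠ 0) :
    1 - rightBreak t ε = (t - 1 - 2 * ε) / (2 * t) := by
  unfold rightBreak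
  field_simp
  ring

lemma leftBreak_pos (hε : 0 < ε) (hsε : 2 * ε < s - 1) : 0 < leftBreak s ε := by
  have hs : 0 < s := by linarith
  rw [leftBreak_eq_div hs.ne']
  exact div_pos (by linarith) (by linarith)

lemma rightBreak_lt_one (hε : 0 < ε) (htε : 2 * ε < t - 1) : rightBreak t ε < 1 := by
  have ht : 0 < t := by linarith
  rw [← sub_pos, one_sub_rightBreak_eq_div ht.ne']
  exact div_pos (by linarith) (by linarith)

lemma leftBreak_lt_half (hs : 0 < s) (hε : 0 < ε) : leftBreak s ε < 1 / 2 :=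
  sub_lt_self _ (by positivity)

lemma half_lt_rightBreak (ht : 0 < t) (hε : 0 < ε) : 1 / 2 < rightBreak t ε :=
  lt_add_of_pos_right _ (by positivity)

lemma trapLeft_lt_half (hs : 1 < s) (hε : 0 < ε) : trapLeft s ε < 1 / 2 :=
  sub_lt_self _ (div_pos hε (sub_pos.2 hs))

lemma half_lt_trapRight (hs : 1 < s) (ht : 0 < t) (hε : 0 < ε) : 1 / 2 < trapRight s t ε :=
  lt_add_of_pos_right _ (div_pos (by nlinarith) (mul_pos (sub_pos.2 hs) ht))

lemma leftBreak_eq_mul_trapLeft (hs : 1 < s) : leftBreak s ε = (1 - s⁻¹) * trapLeft s ε := by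
  have hs' : s - 1 ≠ 0 := (sub_pos.2 hs).ne'
  unfold leftBreak trapLeft
  field_simp
  ring

lemma inv_mul_trapLeft_add_one_sub_rightBreak (hs : 1 < s) (ht : t ≠ 0) :
    t⁻¹ * trapLeft s ε + (1 - rightBreak t ε) = 1 - trapRight s t ε := by
  have hs' : s - 1 ≠ 0 := (sub_pos.2 hs).ne'
  unfold rightBreak trapLeft trapRight
  field_simp
  ring

lemma leftBreak_le_trapLeft (hε : 0 < ε) (hsε : 2 * ε < s - 1) :
    leftBreak s ε ≤ trapLeft s ε := by
  refine sub_le_sub_left ?_ _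
  rw [div_le_div_iff₀ (by linarith) (by linarith)]
  linarith

lemma trapRight_le_rightBreak (ht : 0 < t) (hε : 0 < ε) (hsε : 2 * ε < s - 1) :
    trapRight s t ε ≤ rightBreak t ε := by
  have hs : 0 < s - 1 := by linarith
  refine add_le_add_right ?_ _
  rw [← div_div]
  refine div_le_div_of_nonneg_right ?_ ht.le
  rw [div_le_iff₀ hs]
  linarith

lemma apply_of_lt_leftBreak (hs : s ≠ 0) (hx : x < leftBreak s ε) :
    peakMap s t ε x = 1 - x / leftBreak s ε := by
  rw [peakMap, if_pos hx, leftBreak_eq_div hs, div_div_eq_mul_div]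
  ring

lemma apply_of_lt_half (hx : leftBreak s ε ≤ x) (hx' : x < 1 / 2) :
    peakMap s t ε x = s * (x - 1 / 2) + 1 / 2 + ε := by
  rw [peakMap, if_neg hx.not_gt, if_pos hx']

lemma apply_of_lt_rightBreak (hs : 0 < s) (hε : 0 < ε) (hx : 1 / 2 ≤ x)
    (hx' : x < rightBreak t ε) : peakMap s t ε x = -t * (x - 1 / 2) + 1 / 2 + ε := by
  rw [peakMap, if_neg ((leftBreak_lt_half hs hε).le.trans hx).not_gt, if_neg hx.not_gt, if_pos hx']

lemma apply_of_rightBreak_le (hs : 0 < s) (ht : 0 < t) (hε : 0 < ε) (hx : rightBreak t ε ≤ x) :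
    peakMap s t ε x = 1 - (1 - x) / (1 - rightBreak t ε) := by
  have hhalf : 1 / 2 ≤ x := (half_lt_rightBreak ht hε).le.trans hx
  rw [peakMap, if_neg ((leftBreak_lt_half hs hε).le.trans hhalf).not_gt, if_neg hhalf.not_gt,
    if_neg hx.not_gt, one_sub_rightBreak_eq_div ht.ne', div_div_eq_mul_div]
  ring

lemma left_branch_trapLeft (hs : 1 < s) :
    s * (trapLeft s ε - 1 / 2) + 1 / 2 + ε = trapLeft s ε := by
  have hs' : s - 1 ≠ 0 := (sub_pos.2 hs).ne'
  unfold trapLeft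
  field_simp
  ring

lemma right_branch_trapRight (hs : 1 < s) (ht : t ≠ 0) :
    -t * (trapRight s t ε - 1 / 2) + 1 / 2 + ε = trapLeft s ε := by
  have hs' : s - 1 ≠ 0 := (sub_pos.2 hs).ne'
  unfold trapLeft trapRight
  field_simp
  ring

lemma half_add_lt_trapRight (hs : 1 < s) (ht : 0 < t) (hε : 0 < ε) (hst : s * t < s + t) :
    1 / 2 + ε < trapRight s t ε := by
  refine add_lt_add_right ?_ _
  rw [lt_div_iff₀ (mul_pos (sub_pos.2 hs) ht)]
  exact mul_lt_mul_of_pos_left (by linarith) hε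

lemma mapsTo_trap (ht : 0 < t) (hε : 0 < ε) (hsε : 2 * ε < s - 1) (hst : s * t < s + t) :
    Set.MapsTo (peakMap s t ε) (trap s t ε) (trap s t ε) := by
  rintro x ⟨hux, hxv⟩
  have hs : 1 < s := by linarith
  have hpeak := half_add_lt_trapRight hs ht hε hst
  rcases lt_or_ge x (1 / 2) with hx | hx
  · rw [apply_of_lt_half ((leftBreak_le_trapLeft hε hsε).trans hux.le) hx]
    have hfix := left_branch_trapLeft (ε := ε) hs
    constructor <;> nlinarith
  · rw [apply_of_lt_rightBreak (by linarith) hε hx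
      (hxv.trans_le (trapRight_le_rightBreak ht hε hsε))]
    have hpre := right_branch_trapRight (ε := ε) hs ht.ne'
    constructor <;> nlinarith

lemma mapsTo_Icc (hε : 0 < ε) (hε' : ε ≤ 1 / 2) (hsε : 2 * ε < s - 1) (htε : 2 * ε < t - 1) :
    Set.MapsTo (peakMap s t ε) (Set.Icc 0 1) (Set.Icc 0 1) := by
  rintro x ⟨hx0, hx1⟩
  have hs : 0 < s := by linarith
  have ht : 0 < t := by linarith
  rcases lt_or_ge x (leftBreak s ε) with hxc | hcx
  · rw [apply_of_lt_leftBreak hs.ne' hxc]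
    exact Set.Icc.mem_iff_one_sub_mem.1 (unitInterval.div_mem hx0 (hx0.trans hxc.le) hxc.le)
  rcases lt_or_ge x (1 / 2) with hxh | hhx
  · rw [apply_of_lt_half hcx hxh]
    have hzero : s * (leftBreak s ε - 1 / 2) + 1 / 2 + ε = 0 := by
      unfold leftBreak
      field_simp
      ring
    constructor <;> nlinarith
  rcases lt_or_ge x (rightBreak t ε) with hxd | hdx
  · rw [apply_of_lt_rightBreak hs hε hhx hxd]
    have hzero : -t * (rightBreak t ε - 1 / 2) + 1 / 2 + ε = 0 := by
      unfold rightBreak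
      field_simp
      ring
    constructor <;> nlinarith
  · rw [apply_of_rightBreak_le hs ht hε hdx]
    exact Set.Icc.mem_iff_one_sub_mem.1 (unitInterval.div_mem (sub_nonneg.2 hx1)
      (sub_nonneg.2 (hdx.trans hx1)) (sub_le_sub_left hdx _))

section ForwardInvariant

variable {S : Set ℝ}

lemma volumeReal_inter_Iio_leftBreak_le (hε : 0 < ε) (hsε : 2 * ε < s - 1) (hfin : volume S ≠ ⊤)
    (hinv : Set.MapsTo (peakMap s t ε) S S) :
    volume.real (S ∩ Set.Iio (leftBreak s ε)) ≤ leftBreak s ε * volume.real S := by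
  have hs : s ≠ 0 := by linarith
  have hc := leftBreak_pos hε hsε
  have haff : ∀ x ∈ S ∩ Set.Iio (leftBreak s ε),
      peakMap s t ε x = -(leftBreak s ε)⁻¹ * x + 1 := fun x hx => by
    rw [apply_of_lt_leftBreak hs hx.2]
    ring
  have hle := volumeReal_le_of_mapsTo_of_affine (neg_ne_zero.2 (inv_pos.2 hc).ne') hfin haff
    (hinv.mono_left Set.inter_subset_left)
  rwa [inv_neg, inv_inv, abs_neg, abs_of_pos hc] at hle

lemma volumeReal_inter_Icc_trapLeft_le (hs : 1 < s) (hε : 0 < ε) (hfin : volume S ≠ ⊤)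
    (hinv : Set.MapsTo (peakMap s t ε) S S) :
    volume.real (S ∩ Set.Icc (leftBreak s ε) (trapLeft s ε)) ≤
      s⁻¹ * volume.real (S ∩ Set.Iic (trapLeft s ε)) := by
  have hs0 : 0 < s := by linarith
  have haff : ∀ x ∈ S ∩ Set.Icc (leftBreak s ε) (trapLeft s ε),
      peakMap s t ε x = s * x + (-s / 2 + 1 / 2 + ε) := fun x hx => by
    rw [apply_of_lt_half hx.2.1 (hx.2.2.trans_lt (trapLeft_lt_half hs hε))]
    ring
  have hmaps : Set.MapsTo (peakMap s t ε) (S ∩ Set.Icc (leftBreak s ε) (trapLeft s ε))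
      (S ∩ Set.Iic (trapLeft s ε)) := fun x hx => by
    refine ⟨hinv hx.1, ?_⟩
    rw [haff x hx, Set.mem_Iic]
    nlinarith [left_branch_trapLeft (ε := ε) hs, hx.2.2]
  have hle := volumeReal_le_of_mapsTo_of_affine hs0.ne'
    (measure_ne_top_of_subset Set.inter_subset_left hfin) haff hmaps
  rwa [abs_of_pos (inv_pos.2 hs0)] at hle

lemma volumeReal_inter_Ico_rightBreak_le (hs : 1 < s) (ht : 0 < t) (hε : 0 < ε)
    (hfin : volume S ≠ ⊤) (hinv : Set.MapsTo (peakMap s t ε) S S) :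
    volume.real (S ∩ Set.Ico (trapRight s t ε) (rightBreak t ε)) ≤
      t⁻¹ * volume.real (S ∩ Set.Iic (trapLeft s ε)) := by
  have haff : ∀ x ∈ S ∩ Set.Ico (trapRight s t ε) (rightBreak t ε),
      peakMap s t ε x = -t * x + (t / 2 + 1 / 2 + ε) := fun x hx => by
    rw [apply_of_lt_rightBreak (by linarith) hε
      ((half_lt_trapRight hs ht hε).le.trans hx.2.1) hx.2.2]
    ring
  have hmaps : Set.MapsTo (peakMap s t ε) (S ∩ Set.Ico (trapRight s t ε) (rightBreak t ε))
      (S ∩ Set.Iic (trapLeft s ε)) := fun x hx => by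
    refine ⟨hinv hx.1, ?_⟩
    rw [haff x hx, Set.mem_Iic]
    nlinarith [right_branch_trapRight (ε := ε) hs ht.ne', hx.2.1]
  have hle := volumeReal_le_of_mapsTo_of_affine (neg_ne_zero.2 ht.ne')
    (measure_ne_top_of_subset Set.inter_subset_left hfin) haff hmaps
  rwa [inv_neg, abs_neg, abs_of_pos (inv_pos.2 ht)] at hle

lemma volumeReal_inter_Ici_rightBreak_le (hs : 0 < s) (hε : 0 < ε) (htε : 2 * ε < t - 1)
    (hfin : volume S ≠ ⊤) (hinv : Set.MapsTo (peakMap s t ε) S S) :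
    volume.real (S ∩ Set.Ici (rightBreak t ε)) ≤ (1 - rightBreak t ε) * volume.real S := by
  have ht : 0 < t := by linarith
  have hd : 0 < 1 - rightBreak t ε := sub_pos.2 (rightBreak_lt_one hε htε)
  have haff : ∀ x ∈ S ∩ Set.Ici (rightBreak t ε),
      peakMap s t ε x = (1 - rightBreak t ε)⁻¹ * x + (1 - (1 - rightBreak t ε)⁻¹) := fun x hx => by
    rw [apply_of_rightBreak_le hs ht hε hx.2]
    ring
  have hle := volumeReal_le_of_mapsTo_of_affine (inv_pos.2 hd).ne' hfin haff
    (hinv.mono_left Set.inter_subset_left)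
  rwa [inv_inv, abs_of_pos hd] at hle

lemma volumeReal_inter_Iic_trapLeft_le (hε : 0 < ε) (hsε : 2 * ε < s - 1) (hfin : volume S ≠ ⊤)
    (hinv : Set.MapsTo (peakMap s t ε) S S) :
    volume.real (S ∩ Set.Iic (trapLeft s ε)) ≤ trapLeft s ε * volume.real S := by
  have hs : 1 < s := by linarith
  have hsplit : volume.real (S ∩ Set.Iic (trapLeft s ε)) ≤
      (1 - s⁻¹) * trapLeft s ε * volume.real S +
        s⁻¹ * volume.real (S ∩ Set.Iic (trapLeft s ε)) :=
    calc volume.real (S ∩ Set.Iic (trapLeft s ε))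
        ≤ volume.real (S ∩ Set.Iio (leftBreak s ε)) +
            volume.real (S ∩ Set.Icc (leftBreak s ε) (trapLeft s ε)) :=
          measureReal_inter_le_add_of_subset_union hfin Set.Iic_subset_Iio_union_Icc
      _ ≤ leftBreak s ε * volume.real S + s⁻¹ * volume.real (S ∩ Set.Iic (trapLeft s ε)) :=
          add_le_add (volumeReal_inter_Iio_leftBreak_le hε hsε hfin hinv)
            (volumeReal_inter_Icc_trapLeft_le hs hε hfin hinv)
      _ = _ := by rw [leftBreak_eq_mul_trapLeft hs]
  refine le_of_mul_le_mul_left ?_ (sub_pos.2 (inv_lt_one_of_one_lt₀ hs))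
  linarith

lemma volumeReal_inter_Ici_trapRight_le (hε : 0 < ε) (hsε : 2 * ε < s - 1) (htε : 2 * ε < t - 1)
    (hfin : volume S ≠ ⊤) (hinv : Set.MapsTo (peakMap s t ε) S S) :
    volume.real (S ∩ Set.Ici (trapRight s t ε)) ≤ (1 - trapRight s t ε) * volume.real S := by
  have hs : 1 < s := by linarith
  have ht : 0 < t := by linarith
  calc volume.real (S ∩ Set.Ici (trapRight s t ε))
      ≤ volume.real (S ∩ Set.Ico (trapRight s t ε) (rightBreak t ε)) +
          volume.real (S ∩ Set.Ici (rightBreak t ε)) :=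
        measureReal_inter_le_add_of_subset_union hfin Set.Ici_subset_Ico_union_Ici
    _ ≤ t⁻¹ * volume.real (S ∩ Set.Iic (trapLeft s ε)) +
          (1 - rightBreak t ε) * volume.real S :=
        add_le_add (volumeReal_inter_Ico_rightBreak_le hs ht hε hfin hinv)
          (volumeReal_inter_Ici_rightBreak_le (by linarith) hε htε hfin hinv)
    _ ≤ t⁻¹ * (trapLeft s ε * volume.real S) + (1 - rightBreak t ε) * volume.real S := by
        gcongr
        exact volumeReal_inter_Iic_trapLeft_le hε hsε hfin hinv
    _ = (1 - trapRight s t ε) * volume.real S := by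
        rw [← inv_mul_trapLeft_add_one_sub_rightBreak hs ht.ne']
        ring

lemma volume_eq_zero_of_mapsTo_of_disjoint_trap (hε : 0 < ε) (hsε : 2 * ε < s - 1)
    (htε : 2 * ε < t - 1) (hfin : volume S ≠ ⊤) (hinv : Set.MapsTo (peakMap s t ε) S S)
    (hdisj : Disjoint S (trap s t ε)) : volume S = 0 := by
  have hs : 1 < s := by linarith
  have hcompl : (trap s t ε)ᶜ = Set.Iic (trapLeft s ε) ∪ Set.Ici (trapRight s t ε) := by
    rw [trap, ← Set.Ioi_inter_Iio, Set.compl_inter, Set.compl_Ioi, Set.compl_Iio]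
  have hS : S ∩ (trap s t ε)ᶜ = S := Set.inter_eq_left.2 hdisj.subset_compl_right
  have hcontract : volume.real S ≤ (1 - (trapRight s t ε - trapLeft s ε)) * volume.real S :=
    calc volume.real S
        = volume.real (S ∩ (trap s t ε)ᶜ) := by rw [hS]
      _ ≤ volume.real (S ∩ Set.Iic (trapLeft s ε)) + volume.real (S ∩ Set.Ici (trapRight s t ε)) :=
          measureReal_inter_le_add_of_subset_union hfin hcompl.subset
      _ ≤ trapLeft s ε * volume.real S + (1 - trapRight s t ε) * volume.real S :=
          add_le_add (volumeReal_inter_Iic_trapLeft_le hε hsε hfin hinv)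
            (volumeReal_inter_Ici_trapRight_le hε hsε htε hfin hinv)
      _ = _ := by ring
  have hlength : 0 < trapRight s t ε - trapLeft s ε := by
    linarith [trapLeft_lt_half hs hε, half_lt_trapRight hs (by linarith : 0 < t) hε]
  refine (measureReal_eq_zero_iff hfin).1 (le_antisymm ?_ measureReal_nonneg)
  exact nonpos_of_mul_nonpos_right (by linarith) hlength

end ForwardInvariant

lemma ae_exists_iterate_mem_trap (hε : 0 < ε) (hε' : ε ≤ 1 / 2) (hsε : 2 * ε < s - 1)
    (htε : 2 * ε < t - 1) :
    ∀ᵐ x, x ∈ Set.Icc (0 : ℝ) 1 → ∃ n, (peakMap s t ε)^[n] x ∈ trap s t ε := by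
  let S : Set ℝ := {x | x ∈ Set.Icc 0 1 ∧ ∀ n, (peakMap s t ε)^[n] x ∉ trap s t ε}
  have hfin : volume S ≠ ⊤ :=
    measure_ne_top_of_subset (fun x hx => hx.1) measure_Icc_lt_top.ne
  have hinv : Set.MapsTo (peakMap s t ε) S S := fun x hx =>
    ⟨mapsTo_Icc hε hε' hsε htε hx.1, fun n => hx.2 (n + 1)⟩
  have hdisj : Disjoint S (trap s t ε) := Set.disjoint_left.2 fun x hx => hx.2 0
  have hnull := volume_eq_zero_of_mapsTo_of_disjoint_trap hε hsε htε hfin hinv hdisj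
  filter_upwards [measure_eq_zero_iff_ae_notMem.1 hnull] with x hx hx01
  by_contra! hout
  exact hx ⟨hx01, hout⟩

lemma ae_mem_trap_of_isAcimOn {μ : Measure ℝ} (hμ : IsAcimOn (peakMap s t ε) (Set.Icc 0 1) μ)
    (hε : 0 < ε) (hε' : ε ≤ 1 / 2) (hsε : 2 * ε < s - 1) (htε : 2 * ε < t - 1)
    (hst : s * t < s + t) : ∀ᵐ x ∂μ, x ∈ trap s t ε := by
  have := hμ.isProbabilityMeasure
  refine ae_mem_of_conservative_of_ae_exists_iterate_mem hμ.measurePreserving.conservative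
    measurableSet_Ioo.nullMeasurableSet (mapsTo_trap (by linarith) hε hsε hst) ?_
  filter_upwards [hμ.ae_mem,
    hμ.absolutelyContinuous.ae_le (ae_exists_iterate_mem_trap hε hε' hsε htε)] with x hx hhit
  exact hhit hx

section Limit

variable {ι : Type*} {l : Filter ι} {S T e : ι → ℝ}

lemma tendsto_trap_smallSets (hs : 1 < s) (ht : 0 < t) (hS : Tendsto S l (𝓝 s))
    (hT : Tendsto T l (𝓝 t)) (he : Tendsto e l (𝓝 0)) :
    Tendsto (fun i => trap (S i) (T i) (e i)) l (𝓝 (1 / 2)).smallSets := by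
  have hs' : s - 1 ≠ 0 := (sub_pos.2 hs).ne'
  have hleft : Tendsto (fun i => trapLeft (S i) (e i)) l (𝓝 (1 / 2)) := by
    simpa only [trapLeft, Pi.div_apply, zero_div, sub_zero] using
      (he.div (hS.sub_const 1) hs').const_sub (1 / 2)
  have hright : Tendsto (fun i => trapRight (S i) (T i) (e i)) l (𝓝 (1 / 2)) := by
    simpa only [trapRight, Pi.div_apply, zero_mul, zero_div, add_zero] using
      ((he.mul hS).div ((hS.sub_const 1).mul hT) (mul_ne_zero hs' ht.ne')).const_add (1 / 2)
  exact hleft.Ioo hright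

lemma eventually_ae_mem_of_isAcimOn {μ : ι → Measure ℝ} (hs : 1 < s) (ht : 1 < t)
    (hst : s * t < s + t) (hS : Tendsto S l (𝓝 s)) (hT : Tendsto T l (𝓝 t))
    (he : Tendsto e l (𝓝[>] 0))
    (hμ : ∀ᶠ i in l, IsAcimOn (peakMap (S i) (T i) (e i)) (Set.Icc 0 1) (μ i))
    {U : Set ℝ} (hU : U ∈ 𝓝 (1 / 2)) : ∀ᶠ i in l, ∀ᵐ x ∂μ i, x ∈ U := by
  have he0 : Tendsto e l (𝓝 0) := tendsto_nhds_of_tendsto_nhdsWithin he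
  have hsub := tendsto_smallSets_iff.1 (tendsto_trap_smallSets hs (by linarith) hS hT he0) U hU
  have hSe : ∀ᶠ i in l, 2 * e i < S i - 1 :=
    (he0.const_mul 2).eventually_lt (hS.sub_const 1) (by linarith)
  have hTe : ∀ᶠ i in l, 2 * e i < T i - 1 :=
    (he0.const_mul 2).eventually_lt (hT.sub_const 1) (by linarith)
  have hST : ∀ᶠ i in l, S i * T i < S i + T i := (hS.mul hT).eventually_lt (hS.add hT) hst
  filter_upwards [hμ, hsub, eventually_mem_of_tendsto_nhdsWithin he,
    he0.eventually_le_const (by norm_num : (0 : ℝ) < 1 / 2), hSe, hTe, hST]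
    with i hμi hsubi hpos hhalf hSi hTi hSTi
  filter_upwards [ae_mem_trap_of_isAcimOn hμi hpos hhalf hSi hTi hSTi] with x hx
  exact hsubi hx

end Limit

end peakMap

theorem Wmap_acim_tendsto_dirac_general {ι : Type*} {l : Filter ι} {s t : ℝ} (hs : 1 < s)
    (ht : 1 < t) (hsum : 1 < 1 / s + 1 / t) {S T e : ι → ℝ} (hS : Tendsto S l (𝓝 s))
    (hT : Tendsto T l (𝓝 t)) (he : Tendsto e l (𝓝[>] 0)) {μ : ι → Measure ℝ}
    (hμ : ∀ᶠ i in l, IsAcimOn (peakMap (S i) (T i) (e i)) (Set.Icc 0 1) (μ i))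
    {g : ℝ → ℝ} (hg : Continuous g) :
    Tendsto (fun i => ∫ x, g x ∂μ i) l (𝓝 (g (1 / 2))) := by
  have hst := mul_lt_add_of_one_lt_one_div_add_one_div (by linarith) (by linarith) hsum
  exact tendsto_integral_of_eventually_ae_mem_nhds (hμ.mono fun _ h => h.isProbabilityMeasure)
    (fun _ hU => peakMap.eventually_ae_mem_of_isAcimOn hs ht hst hS hT he hμ hU)
    (Eventually.of_forall fun _ => hg.aestronglyMeasurable) hg.continuousAt

/-- Theorem 1(I): if `1/s₁ + 1/s₂ > 1`, the acim's `μ_a` of `W_a` converge *-weakly to the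
Dirac measure at `1/2` as `a → 0⁺`. -/
theorem Wmap_acim_tendsto_dirac
    (s₁ s₂ p q r : ℝ) (hs₁ : 1 < s₁) (hs₂ : 1 < s₂)
    (hp : 0 < p) (hq : 0 < q) (hr : 0 < r)
    (hsum : 1 < 1/s₁ + 1/s₂)
    (a₁ : ℝ) (ha₁ : 0 < a₁) (μ : ℝ → Measure ℝ)
    (hμ : ∀ a, 0 < a → a < a₁ →
      Set.MapsTo (Wmap s₁ s₂ p q r a) (Set.Icc 0 1) (Set.Icc 0 1) ∧
      IsProbabilityMeasure (μ a) ∧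
      μ a ≪ volume ∧
      μ a (Set.Icc (0:ℝ) 1)ᶜ = 0 ∧
      (∀ A : Set ℝ, MeasurableSet A → μ a (Wmap s₁ s₂ p q r a ⁻¹' A) = μ a A)) :
    ∀ g : ℝ → ℝ, Continuous g →
      Tendsto (fun a => ∫ x, g x ∂(μ a)) (𝓝[>] (0:ℝ)) (𝓝 (g (1/2))) := by
  intro g hg
  refine Wmap_acim_tendsto_dirac_general hs₁ hs₂ hsum (tendsto_const_add_mul_nhdsGT_zero s₁ p)
    (tendsto_const_add_mul_nhdsGT_zero s₂ q) (tendsto_const_mul_nhdsGT_zero hr) ?_ hg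
  filter_upwards [Ioo_mem_nhdsGT ha₁] with a ⟨ha0, ha⟩
  obtain ⟨-, hprob, hac, hsupp, hinv⟩ := hμ a ha0 ha
  rw [Wmap_eq_peakMap] at hinv
  have hT := peakMap.measurable (s₁ + p * a) (s₂ + q * a) (r * a)
  exact ⟨hprob, hac, hsupp, hT, Measure.ext fun A hA => (Measure.map_apply hT hA).trans (hinv A hA)⟩
end

section
/- Suppose 1/s₁ + 1/s₂ = 1. Then as a → 0⁺ the measures μ_a converge *-weakly to the measure ((qs₁+ps₂−p−q)(s₂+2) / [(qs₁+ps₂−p−q)(s₂+2) + 2rs₁s₂²])·μ_0 + (2rs₁s₂² / [(qs₁+ps₂−p−q)(s₂+2) + 2rs₁s₂²])·δ_{1/2}, where δ_{1/2} is the Dirac measure at 1/2; that is, for every continuous g : [0,1] → ℝ, ∫ g dμ_a converges to the corresponding convex combination of ∫ g dμ_0 and g(1/2). -/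
open MeasureTheory Filter Topology

/-- The invariant density of the unperturbed Markov map `W₀`. -/
noncomputable def h0 (s₁ s₂ : ℝ) (x : ℝ) : ℝ :=
  if x < 1/2 then 2*s₁*(s₂+1)/(2*s₁*s₂+s₁-s₂) else 2*s₂*(s₁-1)/(2*s₁*s₂+s₁-s₂)

/-!
For `0 ≤ ρ < 1` let `G_ρ = ∑ ρᵏ g ∘ Wᵏ` be the Abel sum of a bounded observable `g`, and let `D_ρ`
be the primitive on `[0, 1]`, vanishing at both ends, of `G_ρ` minus its Lebesgue mean. The identity
`G_ρ = g + ρ G_ρ ∘ W` becomes a functional equation expressing `D_ρ(t)` through `D_ρ(W t) / W'(t)`,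
and as `W` is expanding, `D_ρ` is bounded uniformly in `ρ`. Hence `(1 - ρ) G_ρ` becomes constant in
the weak sense as `ρ → 1`, and testing against an acim `ν` identifies the constant as `∫ g dν`.

Near the fixed point on the second branch the same equation makes `D_ρ` Hölder of every exponent
`α < 1`, uniformly in `ρ`. If `1 / s₁ + 1 / s₂ = 1`, the image of the peak of `W_a` is at distance
`O(a²)` from that fixed point. So evaluating the functional equation at the peak and at the fixed
point and letting `ρ → 1` gives a linear equation for `∫ g dμ_a - ∫ g` with error `O(a^(2α))`, which
is `o(a)` once `α > 1 / 2`. Both coefficients of that equation vanish at `a = 0`, and the limit is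
the quotient of their derivatives.
-/

lemma intervalIntegrable_of_abs_le {G : ℝ → ℝ} {C : ℝ} (hG : Measurable G)
    (hC : ∀ x, |G x| ≤ C) (a b : ℝ) : IntervalIntegrable G volume a b := by
  rw [intervalIntegrable_iff]
  exact Measure.integrableOn_of_bounded (by simp [Set.uIoc]) hG.aestronglyMeasurable
    (ae_of_all _ hC)

lemma abs_intervalIntegral_le_of_abs_le {G : ℝ → ℝ} {C : ℝ} (hC : ∀ x, |G x| ≤ C) (a b : ℝ) :
    |∫ x in a..b, G x| ≤ C * |b - a| := by
  rw [← Real.norm_eq_abs]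
  exact intervalIntegral.norm_integral_le_of_norm_le_const fun x _ => hC x

/-! ### Weak convergence of bounded functions -/

section WeakConvergence

variable {Ω ι : Type*} {mΩ : MeasurableSpace Ω} {m : Measure Ω} {l : Filter ι}
  {H : ι → Ω → ℝ} {C : ℝ}

lemma tendsto_setIntegral_zero_of_isPiSystem [IsFiniteMeasure m] {π : Set (Set Ω)}
    (hgen : mΩ = MeasurableSpace.generateFrom π) (hπ : IsPiSystem π)
    (hint : ∀ᶠ i in l, Integrable (H i) m) (hbdd : ∀ᶠ i in l, ∀ x, |H i x| ≤ C)
    (huniv : Tendsto (fun i => ∫ x, H i x ∂m) l (𝓝 0))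
    (hbasic : ∀ s ∈ π, Tendsto (fun i => ∫ x in s, H i x ∂m) l (𝓝 0))
    {s : Set Ω} (hs : MeasurableSet s) :
    Tendsto (fun i => ∫ x in s, H i x ∂m) l (𝓝 0) := by
  induction s, hs using MeasurableSpace.induction_on_inter hgen hπ with
  | empty => simp [tendsto_const_nhds]
  | basic s hs => exact hbasic s hs
  | compl s hs ih =>
    have hdiff : Tendsto (fun i => ∫ x, H i x ∂m - ∫ x in s, H i x ∂m) l (𝓝 0) := by
      simpa using huniv.sub ih
    refine hdiff.congr' ?_
    filter_upwards [hint] with i hi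
    rw [← integral_add_compl hs hi, add_sub_cancel_left]
  | iUnion f hdisj hf ih =>
    have hsummable : Summable fun k => C * m.real (f k) := by
      refine Summable.mul_left _ (ENNReal.summable_toReal ?_)
      rw [← measure_iUnion hdisj hf]
      exact measure_ne_top _ _
    have htsum : Tendsto (fun i => ∑' k, ∫ x in f k, H i x ∂m) l (𝓝 (∑' _ : ℕ, (0 : ℝ))) := by
      refine tendsto_tsum_of_dominated_convergence hsummable ih ?_
      filter_upwards [hbdd] with i hi k
      exact norm_setIntegral_le_of_norm_le_const (measure_lt_top _ _) fun x _ => hi x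
    rw [tsum_zero] at htsum
    refine htsum.congr' ?_
    filter_upwards [hint] with i hi
    exact (integral_iUnion hf hdisj hi.integrableOn).symm

lemma abs_integral_mul_sub_integral_mul_le {H₀ u v : Ω → ℝ} (hH : AEStronglyMeasurable H₀ m)
    (hbdd : ∀ x, |H₀ x| ≤ C) (hu : Integrable u m) (hv : Integrable v m) :
    |∫ x, u x * H₀ x ∂m - ∫ x, v x * H₀ x ∂m| ≤ C * ∫ x, |u x - v x| ∂m := by
  have hbdd' : ∀ᵐ x ∂m, ‖H₀ x‖ ≤ C := ae_of_all _ hbdd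
  rw [← integral_sub (hu.mul_bdd hH hbdd') (hv.mul_bdd hH hbdd'), ← integral_const_mul,
    ← Real.norm_eq_abs]
  refine norm_integral_le_of_norm_le ((hu.sub hv).abs.const_mul C) (ae_of_all _ fun x => ?_)
  rw [← sub_mul, norm_mul, mul_comm]
  exact mul_le_mul_of_nonneg_right (hbdd x) (abs_nonneg _)

lemma isClosed_setOf_tendsto_integral_mul_zero
    (hmeas : ∀ᶠ i in l, AEStronglyMeasurable (H i) m) (hbdd : ∀ᶠ i in l, ∀ x, |H i x| ≤ C) :
    IsClosed {f : Ω →₁[m] ℝ | Tendsto (fun i => ∫ x, f x * H i x ∂m) l (𝓝 0)} := by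
  refine isClosed_of_closure_subset fun f hf => Metric.tendsto_nhds.2 fun ε hε => ?_
  have hC : 0 < |C| + 1 := by positivity
  obtain ⟨u, hu, hfu⟩ := Metric.mem_closure_iff.1 hf (ε / 2 / (|C| + 1)) (by positivity)
  filter_upwards [hmeas, hbdd, Metric.tendsto_nhds.1 hu (ε / 2) (half_pos hε)]
    with i hmeas_i hbdd_i hu_i
  have happrox : |∫ x, f x * H i x ∂m - ∫ x, u x * H i x ∂m| ≤ |C| * dist f u := by
    rw [L1.dist_eq_integral_dist]
    exact abs_integral_mul_sub_integral_mul_le hmeas_i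
      (fun x => (hbdd_i x).trans (le_abs_self C)) (L1.integrable_coeFn f) (L1.integrable_coeFn u)
  have hsmall : |C| * dist f u ≤ ε / 2 := by
    rw [lt_div_iff₀ hC] at hfu
    linarith [dist_nonneg (x := f) (y := u)]
  rw [Real.dist_0_eq_abs] at hu_i ⊢
  linarith [abs_sub_abs_le_abs_sub (∫ x, f x * H i x ∂m) (∫ x, u x * H i x ∂m)]

lemma tendsto_integral_mul_zero_of_forall_setIntegral
    (hmeas : ∀ᶠ i in l, AEStronglyMeasurable (H i) m) (hbdd : ∀ᶠ i in l, ∀ x, |H i x| ≤ C)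
    (hset : ∀ s, MeasurableSet s → Tendsto (fun i => ∫ x in s, H i x ∂m) l (𝓝 0))
    {f : Ω → ℝ} (hf : Integrable f m) :
    Tendsto (fun i => ∫ x, f x * H i x ∂m) l (𝓝 0) := by
  refine Integrable.induction (P := fun f : Ω → ℝ =>
    Tendsto (fun i => ∫ x, f x * H i x ∂m) l (𝓝 0)) ?_ ?_
    (isClosed_setOf_tendsto_integral_mul_zero hmeas hbdd) ?_ hf
  · intro c s hs _
    have hconst : Tendsto (fun i => c * ∫ x in s, H i x ∂m) l (𝓝 0) := by
      simpa using (hset s hs).const_mul c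
    refine hconst.congr fun i => ?_
    rw [← integral_const_mul, ← integral_indicator hs]
    exact integral_congr_ae (ae_of_all _ fun x => by by_cases hx : x ∈ s <;> simp [hx])
  · intro u v _ hu hv ihu ihv
    have hadd := ihu.add ihv
    rw [add_zero] at hadd
    refine hadd.congr' ?_
    filter_upwards [hmeas, hbdd] with i hmeas_i hbdd_i
    have hbdd_ae : ∀ᵐ x ∂m, ‖H i x‖ ≤ C := ae_of_all _ hbdd_i
    rw [← integral_add (hu.mul_bdd hmeas_i hbdd_ae) (hv.mul_bdd hmeas_i hbdd_ae)]
    simp only [Pi.add_apply, add_mul]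
  · intro u v huv _ ih
    refine ih.congr fun i => integral_congr_ae ?_
    filter_upwards [huv] with x hx
    rw [hx]

lemma tendsto_integral_zero_of_absolutelyContinuous {ν : Measure Ω} [IsFiniteMeasure m]
    [IsFiniteMeasure ν] (hac : ν ≪ m)
    (hmeas : ∀ᶠ i in l, AEStronglyMeasurable (H i) m) (hbdd : ∀ᶠ i in l, ∀ x, |H i x| ≤ C)
    (hset : ∀ s, MeasurableSet s → Tendsto (fun i => ∫ x in s, H i x ∂m) l (𝓝 0)) :
    Tendsto (fun i => ∫ x, H i x ∂ν) l (𝓝 0) := by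
  refine (tendsto_integral_mul_zero_of_forall_setIntegral hmeas hbdd hset
    (Measure.integrable_toReal_rnDeriv (μ := ν))).congr fun i => ?_
  exact integral_rnDeriv_smul hac

end WeakConvergence

lemma tendsto_integral_zero_of_tendsto_primitive_zero {ι : Type*} {l : Filter ι}
    {H : ι → ℝ → ℝ} {C : ℝ} {ν : Measure ℝ} [IsFiniteMeasure ν] (hac : ν ≪ volume)
    (hsupp : ν (Set.Icc 0 1)ᶜ = 0) (hmeas : ∀ᶠ i in l, Measurable (H i))
    (hbdd : ∀ᶠ i in l, ∀ x, |H i x| ≤ C)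
    (hprim : ∀ t ∈ Set.Icc (0 : ℝ) 1, Tendsto (fun i => ∫ x in (0 : ℝ)..t, H i x) l (𝓝 0)) :
    Tendsto (fun i => ∫ x, H i x ∂ν) l (𝓝 0) := by
  have hac' : ν ≪ volume.restrict (Set.Icc 0 1) := by
    rw [← Measure.restrict_eq_self_of_ae_mem (mem_ae_iff.2 hsupp)]
    exact hac.restrict _
  have hmeas' : ∀ᶠ i in l, AEStronglyMeasurable (H i) (volume.restrict (Set.Icc 0 1)) :=
    hmeas.mono fun i hi => hi.aestronglyMeasurable
  have hint : ∀ᶠ i in l, Integrable (H i) (volume.restrict (Set.Icc 0 1)) := by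
    filter_upwards [hmeas', hbdd] with i hi hbdd_i
    exact Integrable.of_bound hi C (ae_of_all _ hbdd_i)
  have hIcc : ∀ t ∈ Set.Icc (0 : ℝ) 1,
      Tendsto (fun i => ∫ x in Set.Icc 0 t, H i x) l (𝓝 0) := fun t ht =>
    (hprim t ht).congr fun i => by
      rw [integral_Icc_eq_integral_Ioc, intervalIntegral.integral_of_le ht.1]
  refine tendsto_integral_zero_of_absolutelyContinuous hac' hmeas' hbdd fun s hs =>
    tendsto_setIntegral_zero_of_isPiSystem
      (BorelSpace.measurable_eq.trans (borel_eq_generateFrom_Iic ℝ)) isPiSystem_Iic hint hbdd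
      (hIcc 1 ⟨zero_le_one, le_rfl⟩) ?_ hs
  rintro _ ⟨t, rfl⟩
  have hinter : Set.Iic t ∩ Set.Icc 0 1 = Set.Icc 0 (min t 1) := by
    rw [← Set.Ici_inter_Iic, ← Set.Ici_inter_Iic, Set.inter_left_comm, Set.Iic_inter_Iic]
  simp only [Measure.restrict_restrict measurableSet_Iic, hinter]
  rcases lt_or_ge t 0 with ht | ht
  · simp [Set.Icc_eq_empty_of_lt ((min_le_left t 1).trans_lt ht), tendsto_const_nhds]
  · exact hIcc _ ⟨le_min ht zero_le_one, min_le_right _ _⟩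

/-! ### Abel sums along an orbit -/

section AbelSum

variable {X : Type*} {W : X → X} {g : X → ℝ} {Γ ρ : ℝ}

/-- The Abel sum `∑ ρᵏ g(Wᵏ x)` of the observable `g` along the orbit of `x`; it is meaningful
for bounded `g` and `0 ≤ ρ < 1`, and `1 - ρ` times it is an average of `g` over the orbit. -/
noncomputable def abelSum (W : X → X) (g : X → ℝ) (ρ : ℝ) (x : X) : ℝ :=
  ∑' k : ℕ, ρ ^ k * g (W^[k] x)

lemma hasSum_abel_bound (Γ : ℝ) (hρ₀ : 0 ≤ ρ) (hρ₁ : ρ < 1) :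
    HasSum (fun k : ℕ => Γ * ρ ^ k) (Γ / (1 - ρ)) :=
  (hasSum_geometric_of_lt_one hρ₀ hρ₁).mul_left Γ

lemma abs_abel_term_le (hΓ : ∀ x, |g x| ≤ Γ) (hρ₀ : 0 ≤ ρ) (x : X) (k : ℕ) :
    |ρ ^ k * g (W^[k] x)| ≤ Γ * ρ ^ k := by
  rw [abs_mul, abs_of_nonneg (pow_nonneg hρ₀ k), mul_comm]
  exact mul_le_mul_of_nonneg_right (hΓ _) (pow_nonneg hρ₀ k)

lemma summable_abel (hΓ : ∀ x, |g x| ≤ Γ) (hρ₀ : 0 ≤ ρ) (hρ₁ : ρ < 1) (x : X) :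
    Summable fun k : ℕ => ρ ^ k * g (W^[k] x) :=
  (hasSum_abel_bound Γ hρ₀ hρ₁).summable.of_norm_bounded (abs_abel_term_le hΓ hρ₀ x)

lemma abs_abelSum_le (hΓ : ∀ x, |g x| ≤ Γ) (hρ₀ : 0 ≤ ρ) (hρ₁ : ρ < 1) (x : X) :
    |abelSum W g ρ x| ≤ Γ / (1 - ρ) := by
  rw [abelSum, ← Real.norm_eq_abs]
  exact tsum_of_norm_bounded (hasSum_abel_bound Γ hρ₀ hρ₁) (abs_abel_term_le hΓ hρ₀ x)

lemma abelSum_eq (hΓ : ∀ x, |g x| ≤ Γ) (hρ₀ : 0 ≤ ρ) (hρ₁ : ρ < 1) (x : X) :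
    abelSum W g ρ x = g x + ρ * abelSum W g ρ (W x) := by
  simp only [abelSum]
  rw [(summable_abel hΓ hρ₀ hρ₁ x).tsum_eq_zero_add, ← tsum_mul_left]
  simp only [pow_zero, Function.iterate_zero, id, one_mul, Function.iterate_succ_apply, pow_succ',
    mul_assoc]

variable [MeasurableSpace X]

lemma measurable_abelSum (hW : Measurable W) (hg : Measurable g) (hΓ : ∀ x, |g x| ≤ Γ)
    (hρ₀ : 0 ≤ ρ) (hρ₁ : ρ < 1) : Measurable (abelSum W g ρ) := by
  refine measurable_of_tendsto_metrizable (f := fun n x =>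
    ∑ k ∈ Finset.range n, ρ ^ k * g (W^[k] x)) (fun n => ?_) ?_
  · exact Finset.measurable_sum _ fun k _ => (hg.comp (hW.iterate k)).const_mul _
  · exact tendsto_pi_nhds.2 fun x => (summable_abel hΓ hρ₀ hρ₁ x).hasSum.tendsto_sum_nat

lemma one_sub_mul_integral_abelSum {ν : Measure X} [IsFiniteMeasure ν]
    (hW : MeasurePreserving W ν ν) (hg : Measurable g) (hΓ : ∀ x, |g x| ≤ Γ)
    (hρ₀ : 0 ≤ ρ) (hρ₁ : ρ < 1) :
    (1 - ρ) * ∫ x, abelSum W g ρ x ∂ν = ∫ x, g x ∂ν := by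
  have hmeas := measurable_abelSum hW.measurable hg hΓ hρ₀ hρ₁
  have hint : Integrable (abelSum W g ρ) ν :=
    Integrable.of_bound hmeas.aestronglyMeasurable _ (ae_of_all _ (abs_abelSum_le hΓ hρ₀ hρ₁))
  have hint_g : Integrable g ν :=
    Integrable.of_bound hg.aestronglyMeasurable Γ (ae_of_all _ hΓ)
  have hinv : ∫ x, abelSum W g ρ (W x) ∂ν = ∫ x, abelSum W g ρ x ∂ν :=
    (integral_map hW.aemeasurable (hW.map_eq.symm ▸ hmeas.aestronglyMeasurable)).symm.trans
      (by rw [hW.map_eq])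
  have hsplit : ∫ x, abelSum W g ρ x ∂ν = ∫ x, g x ∂ν + ρ * ∫ x, abelSum W g ρ x ∂ν := by
    have hint_W : Integrable (fun x => abelSum W g ρ (W x)) ν :=
      hW.integrable_comp_of_integrable hint
    conv_lhs => rw [integral_congr_ae (ae_of_all _ (abelSum_eq hΓ hρ₀ hρ₁))]
    rw [integral_add hint_g (hint_W.const_mul ρ), integral_const_mul, hinv]
  linarith

end AbelSum

/-! ### Centred primitives -/

section CenteredPrimitive

variable {G : ℝ → ℝ} {C : ℝ}

/-- The primitive on `[0, 1]`, vanishing at both endpoints, of `G` minus its mean. -/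
noncomputable def centeredPrimitive (G : ℝ → ℝ) (t : ℝ) : ℝ :=
  ∫ x in (0 : ℝ)..t, (G x - ∫ y in (0 : ℝ)..1, G y)

@[simp]
lemma centeredPrimitive_zero (G : ℝ → ℝ) : centeredPrimitive G 0 = 0 :=
  intervalIntegral.integral_same

lemma centeredPrimitive_eq (hG : ∀ a b, IntervalIntegrable G volume a b) (t : ℝ) :
    centeredPrimitive G t = (∫ x in (0 : ℝ)..t, G x) - t * ∫ x in (0 : ℝ)..1, G x := by
  rw [centeredPrimitive, intervalIntegral.integral_sub (hG 0 t) intervalIntegrable_const,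
    intervalIntegral.integral_const, sub_zero, smul_eq_mul]

lemma centeredPrimitive_one (hG : ∀ a b, IntervalIntegrable G volume a b) :
    centeredPrimitive G 1 = 0 := by
  rw [centeredPrimitive_eq hG, one_mul, sub_self]

lemma centeredPrimitive_add_const_mul {F : ℝ → ℝ} (hG : ∀ a b, IntervalIntegrable G volume a b)
    (hF : ∀ a b, IntervalIntegrable F volume a b) (ρ t : ℝ) :
    centeredPrimitive (fun x => G x + ρ * F x) t =
      centeredPrimitive G t + ρ * centeredPrimitive F t := by
  have hint : ∀ a b : ℝ, ∫ x in a..b, (G x + ρ * F x) =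
      (∫ x in a..b, G x) + ρ * ∫ x in a..b, F x := fun a b => by
    rw [intervalIntegral.integral_add (hG a b) ((hF a b).const_mul ρ),
      intervalIntegral.integral_const_mul]
  rw [centeredPrimitive_eq (fun a b => (hG a b).add ((hF a b).const_mul ρ)),
    centeredPrimitive_eq hG, centeredPrimitive_eq hF, hint, hint]
  ring

lemma abs_centeredPrimitive_sub_le (hG : Measurable G) (hC : ∀ x, |G x| ≤ C) (t t' : ℝ) :
    |centeredPrimitive G t - centeredPrimitive G t'| ≤ 2 * C * |t - t'| := by
  have hmean : |∫ y in (0 : ℝ)..1, G y| ≤ C := by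
    simpa using abs_intervalIntegral_le_of_abs_le hC 0 1
  have hbdd : ∀ x, |G x - ∫ y in (0 : ℝ)..1, G y| ≤ 2 * C := fun x =>
    (abs_sub _ _).trans (by linarith [hC x])
  have hint := intervalIntegrable_of_abs_le (hG.sub_const _) hbdd
  rw [centeredPrimitive, centeredPrimitive,
    intervalIntegral.integral_interval_sub_left (hint 0 t) (hint 0 t')]
  exact abs_intervalIntegral_le_of_abs_le hbdd t' t

lemma abs_centeredPrimitive_le (hG : Measurable G) (hC : ∀ x, |G x| ≤ C) {t : ℝ}
    (ht : t ∈ Set.Icc (0 : ℝ) 1) : |centeredPrimitive G t| ≤ 2 * C := by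
  have hlip := abs_centeredPrimitive_sub_le hG hC t 0
  rw [centeredPrimitive_zero, sub_zero, sub_zero, abs_of_nonneg ht.1] at hlip
  exact hlip.trans (mul_le_of_le_one_right
    (mul_nonneg zero_le_two ((abs_nonneg _).trans (hC 0))) ht.2)

lemma hasDerivAt_centeredPrimitive (hG : Measurable G) (hC : ∀ x, |G x| ≤ C) {t : ℝ}
    (ht : ContinuousAt G t) :
    HasDerivAt (centeredPrimitive G) (G t - ∫ x in (0 : ℝ)..1, G x) t :=
  intervalIntegral.integral_hasDerivAt_right
    ((intervalIntegrable_of_abs_le hG hC 0 t).sub intervalIntegrable_const)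
    (hG.sub_const _).stronglyMeasurable.stronglyMeasurableAtFilter
    (ht.sub continuousAt_const)

end CenteredPrimitive

/-! ### Contraction estimates -/

lemma le_div_one_sub_of_forall_exists_le {X : Type*} {s : Set X} {φ : X → ℝ} {A l : ℝ}
    (hl₀ : 0 ≤ l) (hl₁ : l < 1) (hbdd : BddAbove (φ '' s))
    (hφ : ∀ x ∈ s, ∃ y ∈ s, φ x ≤ A + l * φ y) {x : X} (hx : x ∈ s) : φ x ≤ A / (1 - l) := by
  have hsup : sSup (φ '' s) ≤ A + l * sSup (φ '' s) := by
    refine csSup_le ⟨φ x, x, hx, rfl⟩ ?_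
    rintro _ ⟨y, hy, rfl⟩
    obtain ⟨z, hz, hyz⟩ := hφ y hy
    exact hyz.trans (by gcongr; exact le_csSup hbdd ⟨z, hz, rfl⟩)
  rw [le_div_iff₀ (sub_pos.2 hl₁)]
  have hle : φ x ≤ sSup (φ '' s) := le_csSup hbdd ⟨x, hx, rfl⟩
  nlinarith

lemma sub_mul_rpow_le_inv_mul_sub {x y S A K α v : ℝ} (hS : 0 < S) (hα₀ : 0 ≤ α) (hα₁ : α ≤ 1)
    (hA : 0 ≤ A) (hK : A ≤ K * (1 - S ^ (α - 1))) (hv₀ : 0 ≤ v) (hv₁ : v ≤ 1)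
    (hxy : x ≤ A * v + S⁻¹ * y) : x - K * v ^ α ≤ S⁻¹ * (y - K * (S * v) ^ α) := by
  have hle : v ≤ v ^ α := by
    simpa using Real.rpow_le_rpow_of_exponent_ge' hv₀ hv₁ hα₀ hα₁
  have hpow : S⁻¹ * (S * v) ^ α = S ^ (α - 1) * v ^ α := by
    rw [Real.mul_rpow hS.le hv₀, Real.rpow_sub_one hS.ne']
    ring
  have hAv : A * v ≤ K * (1 - S ^ (α - 1)) * v ^ α := mul_le_mul hK hle hv₀ (hA.trans hK)
  linarith [congrArg (K * ·) hpow]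

lemma le_mul_rpow_of_le_add_inv_mul {φ : ℝ → ℝ} {S u₀ M A α : ℝ} (hS : 1 < S) (hu₀ : 0 < u₀)
    (hSu₀ : S * u₀ ≤ 1) (hα₀ : 0 ≤ α) (hα₁ : α < 1) (hA : 0 ≤ A) (hM : 0 ≤ M)
    (hbdd : ∀ u ∈ Set.Icc 0 (S * u₀), φ u ≤ M)
    (hφ : ∀ u ∈ Set.Icc 0 u₀, φ u ≤ A * u + S⁻¹ * φ (S * u)) {u : ℝ}
    (hu : u ∈ Set.Icc 0 (S * u₀)) :
    φ u ≤ (M / u₀ ^ α + A / (1 - S ^ (α - 1))) * u ^ α := by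
  have hS₀ : 0 < S := by linarith
  have hθ : 0 < 1 - S ^ (α - 1) :=
    sub_pos.2 (Real.rpow_lt_one_of_one_lt_of_neg hS (by linarith))
  set K := M / u₀ ^ α + A / (1 - S ^ (α - 1)) with hK
  have hKM : M ≤ K * u₀ ^ α := by
    rw [hK, add_mul, div_mul_cancel₀ _ (by positivity)]
    exact le_add_of_nonneg_right (by positivity)
  have hKA : A ≤ K * (1 - S ^ (α - 1)) := by
    rw [hK, add_mul, div_mul_cancel₀ _ hθ.ne']
    exact le_add_of_nonneg_left (by positivity)
  have hdefect : ∀ v ∈ Set.Icc 0 (S * u₀), ∃ w ∈ Set.Icc 0 (S * u₀),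
      max (φ v - K * v ^ α) 0 ≤ 0 + S⁻¹ * max (φ w - K * w ^ α) 0 := by
    intro v hv
    rcases le_total v u₀ with hvu | hvu
    · refine ⟨S * v, ⟨mul_nonneg hS₀.le hv.1, by gcongr⟩, ?_⟩
      have hrec := sub_mul_rpow_le_inv_mul_sub hS₀ hα₀ hα₁.le hA hKA hv.1
        (hvu.trans (by nlinarith)) (hφ v ⟨hv.1, hvu⟩)
      rw [zero_add, ← mul_zero S⁻¹, mul_max_of_nonneg _ _ (inv_pos.2 hS₀).le]
      simpa using max_le_max_right 0 hrec
    · refine ⟨v, hv, ?_⟩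
      have hle : φ v ≤ K * v ^ α := (hbdd v hv).trans (hKM.trans (by gcongr))
      simp [max_eq_right (sub_nonpos.2 hle)]
  have hbddAbove : BddAbove ((fun v => max (φ v - K * v ^ α) 0) '' Set.Icc 0 (S * u₀)) := by
    refine ⟨M, ?_⟩
    rintro _ ⟨v, hv, rfl⟩
    have : 0 ≤ K * v ^ α := mul_nonneg (by positivity) (Real.rpow_nonneg hv.1 α)
    exact max_le (by linarith [hbdd v hv]) hM
  have hzero := le_div_one_sub_of_forall_exists_le (inv_pos.2 hS₀).le
    (inv_lt_one_of_one_lt₀ hS) hbddAbove hdefect hu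
  rw [zero_div] at hzero
  linarith [le_max_left (φ u - K * u ^ α) 0]

/-! ### W-shaped maps -/

/-- The W-shaped map with inner slopes `S` and `-T` and inner peak value `c` at `1 / 2`. It takes
the value `1` at `0` and `1`, and `0` at the two turning points `1 / 2 - c / S`, `1 / 2 + c / T`. -/
noncomputable def wShapeMap (S T c x : ℝ) : ℝ :=
  if x < 1 / 2 - c / S then -(2 * S / (S - 2 * c)) * x + 1
  else if x < 1 / 2 then S * (x - 1 / 2) + c
  else if x < 1 / 2 + c / T then -T * (x - 1 / 2) + c
  else 2 * T / (T - 2 * c) * (x - 1) + 1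

/-- The slope of `wShapeMap S T c` on the branch containing `x`; every branch contains its left
endpoint. -/
noncomputable def wShapeSlope (S T c x : ℝ) : ℝ :=
  if x < 1 / 2 - c / S then -(2 * S / (S - 2 * c))
  else if x < 1 / 2 then S
  else if x < 1 / 2 + c / T then -T
  else 2 * T / (T - 2 * c)

/-- The parameters for which `wShapeMap S T c` is an expanding self-map of `[0, 1]` whose peak
value `c` lies on the third branch, beyond `1 / 2`. The last field is `1 / S + 1 / T ≤ 1`; it keeps
the image of the peak to the left of the fixed point on the second branch. -/
structure IsExpandingWShape (S T c : ℝ) : Prop where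
  half_lt_peak : 1 / 2 < c
  two_mul_peak_lt_left : 2 * c < S
  two_mul_peak_lt_right : 2 * c < T
  peak_lt : c < 1 / 2 + c / T
  add_le_mul : S + T ≤ S * T

lemma measurable_wShapeMap (S T c : ℝ) : Measurable (wShapeMap S T c) := by
  unfold wShapeMap
  refine Measurable.ite measurableSet_Iio (by fun_prop) (Measurable.ite measurableSet_Iio
    (by fun_prop) (Measurable.ite measurableSet_Iio (by fun_prop) (by fun_prop)))

lemma intervalIntegrable_comp_wShapeMap {G : ℝ → ℝ} {C : ℝ} (hG : Measurable G)
    (hC : ∀ x, |G x| ≤ C) (S T c a b : ℝ) :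
    IntervalIntegrable (fun x => G (wShapeMap S T c x)) volume a b :=
  intervalIntegrable_of_abs_le (hG.comp (measurable_wShapeMap S T c)) (fun _ => hC _) a b

lemma wShapeMap_of_lt {S T c x : ℝ} (hx : x < 1 / 2 - c / S) :
    wShapeMap S T c x = -(2 * S / (S - 2 * c)) * x + 1 :=
  if_pos hx

lemma wShapeSlope_of_lt {S T c x : ℝ} (hx : x < 1 / 2 - c / S) :
    wShapeSlope S T c x = -(2 * S / (S - 2 * c)) :=
  if_pos hx

lemma wShapeMap_of_lt_half {S T c x : ℝ} (h₁ : 1 / 2 - c / S ≤ x) (h₂ : x < 1 / 2) :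
    wShapeMap S T c x = S * (x - 1 / 2) + c := by
  rw [wShapeMap, if_neg h₁.not_gt, if_pos h₂]

lemma wShapeSlope_of_lt_half {S T c x : ℝ} (h₁ : 1 / 2 - c / S ≤ x) (h₂ : x < 1 / 2) :
    wShapeSlope S T c x = S := by
  rw [wShapeSlope, if_neg h₁.not_gt, if_pos h₂]

/-- A common bound for the reciprocals of the slopes of `wShapeMap S T c`; the outer branches have
slopes of modulus at least `2`. -/
noncomputable def wShapeRate (S T : ℝ) : ℝ := max (max S⁻¹ T⁻¹) 2⁻¹

lemma wShapeRate_pos (S T : ℝ) : 0 < wShapeRate S T := lt_max_of_lt_right (by norm_num)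

lemma intervalIntegral_comp_of_eq_affine {F W : ℝ → ℝ} {m x₀ y₀ u v : ℝ} (hm : m ≠ 0)
    (huv : u ≤ v) (hW : ∀ x ∈ Set.Ioo u v, W x = m * (x - x₀) + y₀)
    (hF : ∀ a b, IntervalIntegrable F volume a b) :
    ∫ x in u..v, F (W x) = m⁻¹ * ((∫ y in (0 : ℝ)..m * (v - x₀) + y₀, F y) -
      ∫ y in (0 : ℝ)..m * (u - x₀) + y₀, F y) := by
  have hcongr : ∫ x in u..v, F (W x) = ∫ x in u..v, F (m * x + (y₀ - m * x₀)) := by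
    refine intervalIntegral.integral_congr_Ioo_of_le huv fun x hx => ?_
    simp only [hW x hx, mul_sub, sub_add_eq_add_sub, add_sub_assoc]
  rw [hcongr, intervalIntegral.integral_comp_mul_add _ hm, smul_eq_mul,
    intervalIntegral.integral_interval_sub_left (hF _ _) (hF _ _)]
  congr 2 <;> ring

namespace IsExpandingWShape

variable {S T c : ℝ} (h : IsExpandingWShape S T c)

include h

lemma one_lt_left : 1 < S := by linarith [h.half_lt_peak, h.two_mul_peak_lt_left]

lemma one_lt_right : 1 < T := by linarith [h.half_lt_peak, h.two_mul_peak_lt_right]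

lemma left_pos : 0 < S := one_pos.trans h.one_lt_left

lemma right_pos : 0 < T := one_pos.trans h.one_lt_right

lemma peak_pos : 0 < c := by linarith [h.half_lt_peak]

lemma div_left_lt_half : c / S < 1 / 2 := by
  rw [div_lt_iff₀ h.left_pos]
  linarith [h.two_mul_peak_lt_left]

lemma div_right_lt_half : c / T < 1 / 2 := by
  rw [div_lt_iff₀ h.right_pos]
  linarith [h.two_mul_peak_lt_right]

lemma peak_lt_one : c < 1 := by linarith [h.peak_lt, h.div_right_lt_half]

lemma div_left_pos : 0 < c / S := div_pos h.peak_pos h.left_pos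

lemma div_right_pos : 0 < c / T := div_pos h.peak_pos h.right_pos

lemma map_of_half_le {x : ℝ} (h₁ : 1 / 2 ≤ x) (h₂ : x < 1 / 2 + c / T) :
    wShapeMap S T c x = -T * (x - 1 / 2) + c := by
  have := h.div_left_pos
  rw [wShapeMap, if_neg (by linarith), if_neg h₁.not_gt, if_pos h₂]

lemma slope_of_half_le {x : ℝ} (h₁ : 1 / 2 ≤ x) (h₂ : x < 1 / 2 + c / T) :
    wShapeSlope S T c x = -T := by
  have := h.div_left_pos
  rw [wShapeSlope, if_neg (by linarith), if_neg h₁.not_gt, if_pos h₂]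

lemma map_of_ge {x : ℝ} (hx : 1 / 2 + c / T ≤ x) :
    wShapeMap S T c x = 2 * T / (T - 2 * c) * (x - 1) + 1 := by
  have := h.div_left_pos
  have := h.div_right_pos
  rw [wShapeMap, if_neg (by linarith), if_neg (by linarith), if_neg hx.not_gt]

lemma slope_of_ge {x : ℝ} (hx : 1 / 2 + c / T ≤ x) :
    wShapeSlope S T c x = 2 * T / (T - 2 * c) := by
  have := h.div_left_pos
  have := h.div_right_pos
  rw [wShapeSlope, if_neg (by linarith), if_neg (by linarith), if_neg hx.not_gt]

lemma map_one : wShapeMap S T c 1 = 1 := by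
  rw [h.map_of_ge (by linarith [h.div_right_lt_half])]
  ring

lemma outer_branch_left_eq_zero : -(2 * S / (S - 2 * c)) * (1 / 2 - c / S) + 1 = 0 := by
  have := h.left_pos
  have := sub_pos.2 h.two_mul_peak_lt_left
  field_simp
  ring

lemma inner_branch_left_eq_zero : S * (1 / 2 - c / S - 1 / 2) + c = 0 := by
  have := h.left_pos
  field_simp
  ring

lemma inner_branch_right_eq_zero : -T * (1 / 2 + c / T - 1 / 2) + c = 0 := by
  have := h.right_pos
  field_simp
  ring

lemma outer_branch_right_eq_zero : 2 * T / (T - 2 * c) * (1 / 2 + c / T - 1) + 1 = 0 := by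
  have := h.right_pos
  have := sub_pos.2 h.two_mul_peak_lt_right
  field_simp
  ring

lemma outer_slope_left_pos : 0 < 2 * S / (S - 2 * c) :=
  div_pos (mul_pos two_pos h.left_pos) (sub_pos.2 h.two_mul_peak_lt_left)

lemma outer_slope_right_pos : 0 < 2 * T / (T - 2 * c) :=
  div_pos (mul_pos two_pos h.right_pos) (sub_pos.2 h.two_mul_peak_lt_right)

lemma mapsTo : Set.MapsTo (wShapeMap S T c) (Set.Icc 0 1) (Set.Icc 0 1) := by
  have hc := h.peak_lt_one
  have hS := h.left_pos
  have hT := h.right_pos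
  intro x hx
  rcases lt_or_ge x (1 / 2 - c / S) with h₁ | h₁
  · rw [wShapeMap_of_lt h₁]
    have := h.outer_branch_left_eq_zero
    constructor <;> nlinarith [h.outer_slope_left_pos, hx.1]
  rcases lt_or_ge x (1 / 2) with h₂ | h₂
  · rw [wShapeMap_of_lt_half h₁ h₂]
    have := h.inner_branch_left_eq_zero
    constructor <;> nlinarith
  rcases lt_or_ge x (1 / 2 + c / T) with h₃ | h₃
  · rw [h.map_of_half_le h₂ h₃]
    have := h.inner_branch_right_eq_zero
    constructor <;> nlinarith
  · rw [h.map_of_ge h₃]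
    have := h.outer_branch_right_eq_zero
    constructor <;> nlinarith [h.outer_slope_right_pos, hx.2]

lemma wShapeRate_lt_one : wShapeRate S T < 1 :=
  max_lt (max_lt (inv_lt_one_of_one_lt₀ h.one_lt_left) (inv_lt_one_of_one_lt₀ h.one_lt_right))
    (by norm_num)

lemma abs_slope_inv_le (x : ℝ) : |(wShapeSlope S T c x)⁻¹| ≤ wShapeRate S T := by
  have hS := h.left_pos
  have hT := h.right_pos
  have hc := h.peak_pos
  have houter : ∀ U : ℝ, 2 * c < U → |(2 * U / (U - 2 * c))⁻¹| ≤ 2⁻¹ := fun U hU => by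
    rw [inv_div, abs_of_pos (div_pos (by linarith) (by linarith)), div_le_iff₀ (by linarith)]
    linarith
  unfold wShapeSlope wShapeRate
  split_ifs
  · rw [inv_neg, abs_neg]
    exact le_max_of_le_right (houter S h.two_mul_peak_lt_left)
  · rw [abs_of_pos (inv_pos.2 hS)]
    exact le_max_of_le_left (le_max_left _ _)
  · rw [inv_neg, abs_neg, abs_of_pos (inv_pos.2 hT)]
    exact le_max_of_le_left (le_max_right _ _)
  · exact le_max_of_le_right (houter T h.two_mul_peak_lt_right)

section Transfer

variable {F : ℝ → ℝ}

lemma integral_comp_of_le_left (hF : ∀ a b, IntervalIntegrable F volume a b)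
    (hmean : ∫ y in (0 : ℝ)..1, F y = 0) {t : ℝ} (h₀ : 0 ≤ t) (ht : t ≤ 1 / 2 - c / S) :
    ∫ x in (0 : ℝ)..t, F (wShapeMap S T c x) = (-(2 * S / (S - 2 * c)))⁻¹ *
      ∫ y in (0 : ℝ)..-(2 * S / (S - 2 * c)) * t + 1, F y := by
  rw [intervalIntegral_comp_of_eq_affine (x₀ := 0) (y₀ := 1)
    (neg_ne_zero.2 h.outer_slope_left_pos.ne') h₀
    (fun x hx => by rw [wShapeMap_of_lt (hx.2.trans_le ht), sub_zero]) hF, sub_self, mul_zero,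
    zero_add, hmean, sub_zero, sub_zero]

lemma integral_comp_of_le_half (hF : ∀ a b, IntervalIntegrable F volume a b)
    {t : ℝ} (h₁ : 1 / 2 - c / S ≤ t) (ht : t ≤ 1 / 2) :
    ∫ x in (1 / 2 - c / S)..t, F (wShapeMap S T c x) =
      S⁻¹ * ∫ y in (0 : ℝ)..S * (t - 1 / 2) + c, F y := by
  rw [intervalIntegral_comp_of_eq_affine h.left_pos.ne' h₁
    (fun x hx => wShapeMap_of_lt_half hx.1.le (hx.2.trans_le ht)) hF, h.inner_branch_left_eq_zero,
    intervalIntegral.integral_same, sub_zero]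

lemma integral_comp_of_le_right (hF : ∀ a b, IntervalIntegrable F volume a b)
    {t : ℝ} (h₁ : 1 / 2 ≤ t) (ht : t ≤ 1 / 2 + c / T) :
    ∫ x in (1 / 2 : ℝ)..t, F (wShapeMap S T c x) =
      (-T)⁻¹ * (∫ y in (0 : ℝ)..-T * (t - 1 / 2) + c, F y) + T⁻¹ * ∫ y in (0 : ℝ)..c, F y := by
  rw [intervalIntegral_comp_of_eq_affine (neg_ne_zero.2 h.right_pos.ne') h₁
    (fun x hx => h.map_of_half_le hx.1.le (hx.2.trans_le ht)) hF, sub_self, mul_zero, zero_add]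
  ring

lemma integral_comp_of_ge (hF : ∀ a b, IntervalIntegrable F volume a b)
    {t : ℝ} (h₁ : 1 / 2 + c / T ≤ t) :
    ∫ x in (1 / 2 + c / T)..t, F (wShapeMap S T c x) =
      (2 * T / (T - 2 * c))⁻¹ * ∫ y in (0 : ℝ)..2 * T / (T - 2 * c) * (t - 1) + 1, F y := by
  rw [intervalIntegral_comp_of_eq_affine h.outer_slope_right_pos.ne' h₁
    (fun x hx => h.map_of_ge hx.1.le) hF, h.outer_branch_right_eq_zero,
    intervalIntegral.integral_same, sub_zero]

lemma integral_comp_eq (hF : ∀ a b, IntervalIntegrable F volume a b)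
    (hFW : ∀ a b, IntervalIntegrable (fun x => F (wShapeMap S T c x)) volume a b)
    (hmean : ∫ y in (0 : ℝ)..1, F y = 0) {t : ℝ} (ht : 0 ≤ t) :
    ∫ x in (0 : ℝ)..t, F (wShapeMap S T c x) =
      (wShapeSlope S T c t)⁻¹ * (∫ y in (0 : ℝ)..wShapeMap S T c t, F y) +
        (if 1 / 2 ≤ t then 1 else 0) * ((S⁻¹ + T⁻¹) * ∫ y in (0 : ℝ)..c, F y) := by
  have hsplit := fun a b d => intervalIntegral.integral_add_adjacent_intervals (hFW a b) (hFW b d)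
  have hx₁ := h.div_left_lt_half
  have hS := h.div_left_pos
  have hT := h.div_right_pos
  have hleft : ∫ x in (0 : ℝ)..1 / 2 - c / S, F (wShapeMap S T c x) = 0 := by
    rw [h.integral_comp_of_le_left hF hmean (by linarith) le_rfl, h.outer_branch_left_eq_zero,
      intervalIntegral.integral_same, mul_zero]
  have hhalf : ∫ x in (0 : ℝ)..1 / 2, F (wShapeMap S T c x) =
      S⁻¹ * ∫ y in (0 : ℝ)..c, F y := by
    rw [← hsplit 0 (1 / 2 - c / S), hleft, h.integral_comp_of_le_half hF (by linarith) le_rfl,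
      sub_self, mul_zero, zero_add, zero_add]
  have hright : ∫ x in (0 : ℝ)..1 / 2 + c / T, F (wShapeMap S T c x) =
      (S⁻¹ + T⁻¹) * ∫ y in (0 : ℝ)..c, F y := by
    rw [← hsplit 0 (1 / 2), hhalf, h.integral_comp_of_le_right hF (by linarith) le_rfl,
      h.inner_branch_right_eq_zero, intervalIntegral.integral_same, mul_zero, zero_add, add_mul]
  rcases lt_or_ge t (1 / 2 - c / S) with h₁ | h₁
  · rw [h.integral_comp_of_le_left hF hmean ht h₁.le, wShapeMap_of_lt h₁, wShapeSlope_of_lt h₁,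
      if_neg (by linarith), zero_mul, add_zero]
  rcases lt_or_ge t (1 / 2) with h₂ | h₂
  · rw [← hsplit 0 (1 / 2 - c / S), hleft, h.integral_comp_of_le_half hF h₁ h₂.le,
      wShapeMap_of_lt_half h₁ h₂, wShapeSlope_of_lt_half h₁ h₂, if_neg h₂.not_ge]
    ring
  rw [if_pos h₂, one_mul]
  rcases lt_or_ge t (1 / 2 + c / T) with h₃ | h₃
  · rw [← hsplit 0 (1 / 2), hhalf, h.integral_comp_of_le_right hF h₂ h₃.le,
      h.map_of_half_le h₂ h₃, h.slope_of_half_le h₂ h₃]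
    ring
  · rw [← hsplit 0 (1 / 2 + c / T), hright, h.integral_comp_of_ge hF h₃, h.map_of_ge h₃,
      h.slope_of_ge h₃]
    ring

end Transfer

section CenteredPrimitive

variable {G : ℝ → ℝ} {C : ℝ}

lemma integral_comp_sub_mean (hG : Measurable G) (hC : ∀ x, |G x| ≤ C) {t : ℝ} (ht : 0 ≤ t) :
    (∫ x in (0 : ℝ)..t, G (wShapeMap S T c x)) - t * (∫ y in (0 : ℝ)..1, G y) =
      (wShapeSlope S T c t)⁻¹ * centeredPrimitive G (wShapeMap S T c t) +
        (if 1 / 2 ≤ t then 1 else 0) * ((S⁻¹ + T⁻¹) * centeredPrimitive G c) := by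
  have hint := intervalIntegrable_of_abs_le hG hC
  have hintW := intervalIntegrable_comp_wShapeMap hG hC S T c
  have hmean : ∫ x in (0 : ℝ)..1, (G x - ∫ y in (0 : ℝ)..1, G y) = 0 :=
    (centeredPrimitive_eq hint 1).trans (by ring)
  have htransfer := h.integral_comp_eq (fun a b => (hint a b).sub intervalIntegrable_const)
    (fun a b => (hintW a b).sub intervalIntegrable_const) hmean ht
  rw [intervalIntegral.integral_sub (hintW 0 t) intervalIntegrable_const,
    intervalIntegral.integral_const, sub_zero, smul_eq_mul] at htransfer
  exact htransfer

lemma integral_comp (hG : Measurable G) (hC : ∀ x, |G x| ≤ C) :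
    ∫ x in (0 : ℝ)..1, G (wShapeMap S T c x) =
      (∫ x in (0 : ℝ)..1, G x) + (S⁻¹ + T⁻¹) * centeredPrimitive G c := by
  have heq := h.integral_comp_sub_mean hG hC zero_le_one
  rw [h.map_one, centeredPrimitive_one (intervalIntegrable_of_abs_le hG hC),
    if_pos (by norm_num)] at heq
  linarith

lemma centeredPrimitive_comp (hG : Measurable G) (hC : ∀ x, |G x| ≤ C) {t : ℝ} (ht : 0 ≤ t) :
    centeredPrimitive (fun x => G (wShapeMap S T c x)) t =
      (wShapeSlope S T c t)⁻¹ * centeredPrimitive G (wShapeMap S T c t) +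
        ((if 1 / 2 ≤ t then 1 else 0) - t) * ((S⁻¹ + T⁻¹) * centeredPrimitive G c) := by
  have hintW := intervalIntegrable_comp_wShapeMap hG hC S T c
  have heq := h.integral_comp_sub_mean hG hC ht
  rw [centeredPrimitive_eq hintW, h.integral_comp hG hC]
  linarith

end CenteredPrimitive

end IsExpandingWShape

/-! ### The Abel primitive of a W-shaped map -/

/-- `ν` is an absolutely continuous invariant probability measure of `W` carried by `[0, 1]`. -/
structure IsAcim (W : ℝ → ℝ) (ν : Measure ℝ) : Prop where
  isProbabilityMeasure : IsProbabilityMeasure ν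
  absolutelyContinuous : ν ≪ volume
  measure_compl_Icc : ν (Set.Icc 0 1)ᶜ = 0
  measurePreserving : MeasurePreserving W ν ν

/-- The centred primitive of the Abel sum of `g` along the orbits of `wShapeMap S T c`. -/
noncomputable def abelPrimitive (S T c : ℝ) (g : ℝ → ℝ) (ρ t : ℝ) : ℝ :=
  centeredPrimitive (abelSum (wShapeMap S T c) g ρ) t

/-- The Lebesgue mean over `[0, 1]` of the Abel averages of `g`, minus the mean of `g` itself. It
vanishes when Lebesgue measure is invariant, and for `ρ → 1` it approaches the difference between
the integrals of `g` against the acim and against Lebesgue measure. -/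
noncomputable def abelDefect (S T c : ℝ) (g : ℝ → ℝ) (ρ : ℝ) : ℝ :=
  (1 - ρ) * (∫ x in (0 : ℝ)..1, abelSum (wShapeMap S T c) g ρ x) - ∫ x in (0 : ℝ)..1, g x

/-- The fixed point of `wShapeMap S T c` on its second branch. -/
noncomputable def wShapeFixedPoint (S c : ℝ) : ℝ := 1 / 2 - (c - 1 / 2) / (S - 1)

/-- The distance from the image of the peak value `c` to the fixed point. -/
noncomputable def peakGap (S T c : ℝ) : ℝ := (c - 1 / 2) * (S * T - S - T) / (S - 1)

/-- The Hölder constant of exponent `α`, at the fixed point, of the Abel primitives of functions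
bounded by `Γ`. -/
noncomputable def abelHolderConst (S T c Γ α : ℝ) : ℝ :=
  2 * (4 * Γ / (1 - wShapeRate S T)) / (wShapeFixedPoint S c / S) ^ α +
    4 * Γ / (1 - S ^ (α - 1))

/-- The total weight `∑ T⁻¹ S⁻ᵏ` given to the fixed point by an orbit that enters it from the third
branch. -/
noncomputable def fixedPointWeight (S T : ℝ) : ℝ := T⁻¹ / (1 - S⁻¹)

/-- The coefficient of `∫ g dν - ∫ g` in the limiting equation at the peak. -/
noncomputable def acimCoeff (S T c : ℝ) : ℝ :=
  (S⁻¹ + T⁻¹)⁻¹ - (1 - c) - fixedPointWeight S T * wShapeFixedPoint S c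

lemma abs_abelDefect_le {g : ℝ → ℝ} {Γ ρ : ℝ} (hΓ : ∀ x, |g x| ≤ Γ) (S T c : ℝ)
    (hρ₀ : 0 ≤ ρ) (hρ₁ : ρ < 1) : |abelDefect S T c g ρ| ≤ 2 * Γ := by
  have hmean : |∫ x in (0 : ℝ)..1, g x| ≤ Γ := by
    simpa using abs_intervalIntegral_le_of_abs_le hΓ 0 1
  have habel : |(1 - ρ) * ∫ x in (0 : ℝ)..1, abelSum (wShapeMap S T c) g ρ x| ≤ Γ := by
    have hle := abs_intervalIntegral_le_of_abs_le
      (abs_abelSum_le (W := wShapeMap S T c) hΓ hρ₀ hρ₁) 0 1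
    rw [sub_zero, abs_one, mul_one, le_div_iff₀ (sub_pos.2 hρ₁)] at hle
    rwa [abs_mul, abs_of_pos (sub_pos.2 hρ₁), mul_comm]
  exact (abs_sub _ _).trans (by linarith)

namespace IsExpandingWShape

variable {S T c : ℝ} (h : IsExpandingWShape S T c)

section FixedPoint

include h

lemma inner_branch_fixedPoint_sub (u : ℝ) :
    S * (wShapeFixedPoint S c - u - 1 / 2) + c = wShapeFixedPoint S c - S * u := by
  have := sub_pos.2 h.one_lt_left
  rw [wShapeFixedPoint]
  field_simp
  ring

lemma fixedPoint_pos : 0 < wShapeFixedPoint S c := by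
  rw [wShapeFixedPoint, sub_pos, div_lt_iff₀ (sub_pos.2 h.one_lt_left)]
  linarith [h.two_mul_peak_lt_left]

lemma fixedPoint_lt_half : wShapeFixedPoint S c < 1 / 2 :=
  sub_lt_self _ (div_pos (sub_pos.2 h.half_lt_peak) (sub_pos.2 h.one_lt_left))

lemma fixedPoint_sub_div : wShapeFixedPoint S c - wShapeFixedPoint S c / S = 1 / 2 - c / S := by
  have := h.left_pos
  have := sub_pos.2 h.one_lt_left
  rw [wShapeFixedPoint]
  field_simp
  ring

lemma map_peak : wShapeMap S T c c = wShapeFixedPoint S c - peakGap S T c := by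
  have := sub_pos.2 h.one_lt_left
  rw [h.map_of_half_le h.half_lt_peak.le h.peak_lt, wShapeFixedPoint, peakGap]
  field_simp
  ring

lemma peakGap_nonneg : 0 ≤ peakGap S T c :=
  div_nonneg (mul_nonneg (sub_pos.2 h.half_lt_peak).le (by linarith [h.add_le_mul]))
    (sub_pos.2 h.one_lt_left).le

lemma peakGap_le_fixedPoint : peakGap S T c ≤ wShapeFixedPoint S c := by
  have := (h.mapsTo ⟨h.peak_pos.le, h.peak_lt_one.le⟩).1
  linarith [h.map_peak]

end FixedPoint

variable {g : ℝ → ℝ} {Γ ρ : ℝ} (hg : Measurable g) (hΓ : ∀ x, |g x| ≤ Γ)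

include h hg hΓ

lemma abelDefect_eq (hρ₀ : 0 ≤ ρ) (hρ₁ : ρ < 1) :
    abelDefect S T c g ρ = ρ * ((S⁻¹ + T⁻¹) * abelPrimitive S T c g ρ c) := by
  have hmeas := measurable_abelSum (measurable_wShapeMap S T c) hg hΓ hρ₀ hρ₁
  have hbdd := abs_abelSum_le (W := wShapeMap S T c) hΓ hρ₀ hρ₁
  have hsplit : ∫ x in (0 : ℝ)..1, abelSum (wShapeMap S T c) g ρ x = (∫ x in (0 : ℝ)..1, g x) +
      ρ * ∫ x in (0 : ℝ)..1, abelSum (wShapeMap S T c) g ρ (wShapeMap S T c x) := by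
    rw [← intervalIntegral.integral_const_mul, ← intervalIntegral.integral_add
      (intervalIntegrable_of_abs_le hg hΓ 0 1)
      ((intervalIntegrable_comp_wShapeMap hmeas hbdd S T c 0 1).const_mul ρ)]
    exact intervalIntegral.integral_congr fun x _ => abelSum_eq hΓ hρ₀ hρ₁ x
  rw [h.integral_comp hmeas hbdd] at hsplit
  rw [abelDefect, abelPrimitive]
  linarith

lemma abelPrimitive_eq (hρ₀ : 0 ≤ ρ) (hρ₁ : ρ < 1) {t : ℝ} (ht : 0 ≤ t) :
    abelPrimitive S T c g ρ t = centeredPrimitive g t +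
      ρ * ((wShapeSlope S T c t)⁻¹ * abelPrimitive S T c g ρ (wShapeMap S T c t)) +
      ((if 1 / 2 ≤ t then 1 else 0) - t) * abelDefect S T c g ρ := by
  have hmeas := measurable_abelSum (measurable_wShapeMap S T c) hg hΓ hρ₀ hρ₁
  have hbdd := abs_abelSum_le (W := wShapeMap S T c) hΓ hρ₀ hρ₁
  rw [h.abelDefect_eq hg hΓ hρ₀ hρ₁, abelPrimitive, funext (abelSum_eq hΓ hρ₀ hρ₁),
    centeredPrimitive_add_const_mul (intervalIntegrable_of_abs_le hg hΓ)
      (intervalIntegrable_comp_wShapeMap hmeas hbdd S T c), h.centeredPrimitive_comp hmeas hbdd ht,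
    abelPrimitive, abelPrimitive]
  ring

lemma abs_abelPrimitive_le (hρ₀ : 0 ≤ ρ) (hρ₁ : ρ < 1) {t : ℝ} (ht : t ∈ Set.Icc (0 : ℝ) 1) :
    |abelPrimitive S T c g ρ t| ≤ 4 * Γ / (1 - wShapeRate S T) := by
  refine le_div_one_sub_of_forall_exists_le (φ := fun t => |abelPrimitive S T c g ρ t|)
    (wShapeRate_pos S T).le h.wShapeRate_lt_one ?_ (fun x hx => ?_) ht
  · refine ⟨2 * (Γ / (1 - ρ)), ?_⟩
    rintro _ ⟨x, hx, rfl⟩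
    exact abs_centeredPrimitive_le
      (measurable_abelSum (measurable_wShapeMap S T c) hg hΓ hρ₀ hρ₁) (abs_abelSum_le hΓ hρ₀ hρ₁) hx
  · refine ⟨_, h.mapsTo hx, ?_⟩
    have hsource := abs_centeredPrimitive_le hg hΓ hx
    have hbranch : |ρ * ((wShapeSlope S T c x)⁻¹ * abelPrimitive S T c g ρ (wShapeMap S T c x))| ≤
        wShapeRate S T * |abelPrimitive S T c g ρ (wShapeMap S T c x)| := by
      rw [← mul_assoc, abs_mul, abs_mul, abs_of_nonneg hρ₀]
      gcongr
      exact (mul_le_of_le_one_left (abs_nonneg _) hρ₁.le).trans (h.abs_slope_inv_le x)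
    have hdefect : |((if 1 / 2 ≤ x then 1 else 0) - x) * abelDefect S T c g ρ| ≤ 2 * Γ := by
      rw [abs_mul]
      have hfactor : |(if 1 / 2 ≤ x then 1 else 0) - x| ≤ 1 := by
        rw [abs_le]
        split_ifs <;> constructor <;> linarith [hx.1, hx.2]
      exact (mul_le_of_le_one_left (abs_nonneg _) hfactor).trans
        (abs_abelDefect_le hΓ S T c hρ₀ hρ₁)
    rw [h.abelPrimitive_eq hg hΓ hρ₀ hρ₁ hx.1]
    exact (abs_add_three _ _ _).trans (by linarith)

lemma tendsto_integral_abelSum_sub_mean {ν : Measure ℝ} [IsFiniteMeasure ν] (hac : ν ≪ volume)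
    (hsupp : ν (Set.Icc 0 1)ᶜ = 0) :
    Tendsto (fun ρ => ∫ x, (1 - ρ) * (abelSum (wShapeMap S T c) g ρ x -
      ∫ y in (0 : ℝ)..1, abelSum (wShapeMap S T c) g ρ y) ∂ν) (𝓝[<] 1) (𝓝 0) := by
  have hρ : ∀ᶠ ρ : ℝ in 𝓝[<] 1, ρ ∈ Set.Ioo 0 1 := Ioo_mem_nhdsLT zero_lt_one
  refine tendsto_integral_zero_of_tendsto_primitive_zero (C := 2 * Γ) hac hsupp ?_ ?_
    fun t ht => ?_
  · filter_upwards [hρ] with ρ hρ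
    exact ((measurable_abelSum (measurable_wShapeMap S T c) hg hΓ hρ.1.le hρ.2).sub_const
      _).const_mul _
  · filter_upwards [hρ] with ρ hρ x
    have hG := abs_abelSum_le (W := wShapeMap S T c) hΓ hρ.1.le hρ.2
    have hmean := abs_intervalIntegral_le_of_abs_le hG 0 1
    rw [sub_zero, abs_one, mul_one] at hmean
    rw [abs_mul, abs_of_pos (sub_pos.2 hρ.2), mul_comm, ← le_div_iff₀ (sub_pos.2 hρ.2),
      mul_div_assoc]
    exact (abs_sub _ _).trans (by linarith [hG x])
  · have hbound : Tendsto (fun ρ : ℝ => (1 - ρ) * (4 * Γ / (1 - wShapeRate S T)))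
        (𝓝[<] 1) (𝓝 0) :=
      tendsto_nhdsWithin_of_tendsto_nhds (Continuous.tendsto' (by fun_prop) _ _ (by simp))
    refine squeeze_zero_norm' ?_ hbound
    filter_upwards [hρ] with ρ hρ
    rw [intervalIntegral.integral_const_mul, norm_mul, Real.norm_of_nonneg (sub_pos.2 hρ.2).le]
    exact mul_le_mul_of_nonneg_left (h.abs_abelPrimitive_le hg hΓ hρ.1.le hρ.2 ht)
      (sub_pos.2 hρ.2).le

lemma tendsto_abelDefect {ν : Measure ℝ} (hν : IsAcim (wShapeMap S T c) ν) :
    Tendsto (abelDefect S T c g) (𝓝[<] 1) (𝓝 ((∫ x, g x ∂ν) - ∫ x in (0 : ℝ)..1, g x)) := by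
  have := hν.isProbabilityMeasure
  have hsub := (h.tendsto_integral_abelSum_sub_mean hg hΓ hν.absolutelyContinuous
    hν.measure_compl_Icc).const_sub ((∫ x, g x ∂ν) - ∫ x in (0 : ℝ)..1, g x)
  rw [sub_zero] at hsub
  refine hsub.congr' ?_
  filter_upwards [Ioo_mem_nhdsLT zero_lt_one] with ρ hρ
  have hint : Integrable (abelSum (wShapeMap S T c) g ρ) ν :=
    Integrable.of_bound (measurable_abelSum (measurable_wShapeMap S T c) hg hΓ hρ.1.le
      hρ.2).aestronglyMeasurable _ (ae_of_all _ (abs_abelSum_le hΓ hρ.1.le hρ.2))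
  have hinv := one_sub_mul_integral_abelSum hν.measurePreserving hg hΓ hρ.1.le hρ.2
  rw [integral_const_mul, integral_sub hint (integrable_const _), integral_const, probReal_univ,
    one_smul, abelDefect]
  linarith

lemma abelPrimitive_fixedPoint_sub (hρ₀ : 0 ≤ ρ) (hρ₁ : ρ < 1) {u : ℝ}
    (hu : u ∈ Set.Icc 0 (wShapeFixedPoint S c / S)) :
    abelPrimitive S T c g ρ (wShapeFixedPoint S c - u) =
      centeredPrimitive g (wShapeFixedPoint S c - u) +
        ρ * (S⁻¹ * abelPrimitive S T c g ρ (wShapeFixedPoint S c - S * u)) -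
        (wShapeFixedPoint S c - u) * abelDefect S T c g ρ := by
  have h₁ : 1 / 2 - c / S ≤ wShapeFixedPoint S c - u := by linarith [h.fixedPoint_sub_div, hu.2]
  have h₂ : wShapeFixedPoint S c - u < 1 / 2 := by linarith [h.fixedPoint_lt_half, hu.1]
  rw [h.abelPrimitive_eq hg hΓ hρ₀ hρ₁ (by linarith [h.div_left_lt_half]),
    wShapeMap_of_lt_half h₁ h₂, wShapeSlope_of_lt_half h₁ h₂, h.inner_branch_fixedPoint_sub,
    if_neg h₂.not_ge]
  ring

lemma abelPrimitive_fixedPoint (hρ₀ : 0 ≤ ρ) (hρ₁ : ρ < 1) :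
    abelPrimitive S T c g ρ (wShapeFixedPoint S c) =
      (centeredPrimitive g (wShapeFixedPoint S c) -
        wShapeFixedPoint S c * abelDefect S T c g ρ) / (1 - ρ * S⁻¹) := by
  have heq := h.abelPrimitive_fixedPoint_sub hg hΓ hρ₀ hρ₁
    ⟨le_rfl, (div_pos h.fixedPoint_pos h.left_pos).le⟩
  have hpos : 0 < 1 - ρ * S⁻¹ :=
    sub_pos.2 (mul_lt_one_of_nonneg_of_lt_one_left hρ₀ hρ₁ (inv_lt_one_of_one_lt₀ h.one_lt_left).le)
  rw [mul_zero, sub_zero] at heq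
  rw [eq_div_iff hpos.ne']
  linarith

lemma abelPrimitive_peak (hρ₀ : 0 ≤ ρ) (hρ₁ : ρ < 1) :
    abelPrimitive S T c g ρ c = centeredPrimitive g c -
      ρ * (T⁻¹ * abelPrimitive S T c g ρ (wShapeFixedPoint S c - peakGap S T c)) +
      (1 - c) * abelDefect S T c g ρ := by
  rw [h.abelPrimitive_eq hg hΓ hρ₀ hρ₁ h.peak_pos.le, h.map_peak,
    h.slope_of_half_le h.half_lt_peak.le h.peak_lt, if_pos h.half_lt_peak.le]
  ring

lemma abs_abelPrimitive_sub_le_add (hρ₀ : 0 ≤ ρ) (hρ₁ : ρ < 1) {u : ℝ}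
    (hu : u ∈ Set.Icc 0 (wShapeFixedPoint S c / S)) :
    |abelPrimitive S T c g ρ (wShapeFixedPoint S c - u) -
        abelPrimitive S T c g ρ (wShapeFixedPoint S c)| ≤
      4 * Γ * u + S⁻¹ * |abelPrimitive S T c g ρ (wShapeFixedPoint S c - S * u) -
        abelPrimitive S T c g ρ (wShapeFixedPoint S c)| := by
  set y := wShapeFixedPoint S c
  set D := abelPrimitive S T c g ρ
  have heq := h.abelPrimitive_fixedPoint_sub hg hΓ hρ₀ hρ₁ hu
  have heq₀ := h.abelPrimitive_fixedPoint_sub hg hΓ hρ₀ hρ₁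
    ⟨le_rfl, (div_pos h.fixedPoint_pos h.left_pos).le⟩
  rw [mul_zero, sub_zero] at heq₀
  have hS := inv_pos.2 h.left_pos
  have hdiff : D (y - u) - D y = (centeredPrimitive g (y - u) - centeredPrimitive g y) +
      ρ * (S⁻¹ * (D (y - S * u) - D y)) + u * abelDefect S T c g ρ := by
    linarith
  have hsource : |centeredPrimitive g (y - u) - centeredPrimitive g y| ≤ 2 * Γ * u := by
    refine (abs_centeredPrimitive_sub_le hg hΓ _ _).trans_eq ?_
    rw [sub_sub_cancel_left, abs_neg, abs_of_nonneg hu.1]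
  have hbranch : |ρ * (S⁻¹ * (D (y - S * u) - D y))| ≤ S⁻¹ * |D (y - S * u) - D y| := by
    rw [abs_mul, abs_mul, abs_of_pos hS, abs_of_nonneg hρ₀]
    exact mul_le_of_le_one_left (by positivity) hρ₁.le
  have hdefect : |u * abelDefect S T c g ρ| ≤ u * (2 * Γ) := by
    rw [abs_mul, abs_of_nonneg hu.1]
    exact mul_le_mul_of_nonneg_left (abs_abelDefect_le hΓ S T c hρ₀ hρ₁) hu.1
  rw [hdiff]
  exact (abs_add_three _ _ _).trans (by linarith)

lemma abs_abelPrimitive_sub_le_rpow {α : ℝ} (hα₀ : 0 ≤ α) (hα₁ : α < 1) (hρ₀ : 0 ≤ ρ)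
    (hρ₁ : ρ < 1) {u : ℝ} (hu : u ∈ Set.Icc 0 (wShapeFixedPoint S c)) :
    |abelPrimitive S T c g ρ (wShapeFixedPoint S c - u) -
      abelPrimitive S T c g ρ (wShapeFixedPoint S c)| ≤ abelHolderConst S T c Γ α * u ^ α := by
  set y := wShapeFixedPoint S c
  have hS := h.one_lt_left
  have hy₀ : 0 < y := h.fixedPoint_pos
  have hy₁ : y < 1 / 2 := h.fixedPoint_lt_half
  have hSy : S * (y / S) = y := mul_div_cancel₀ y h.left_pos.ne'
  have hΓ₀ : 0 ≤ Γ := (abs_nonneg _).trans (hΓ 0)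
  have hrate := sub_pos.2 h.wShapeRate_lt_one
  have hbound : ∀ u ∈ Set.Icc 0 y, |abelPrimitive S T c g ρ (y - u)| ≤
      4 * Γ / (1 - wShapeRate S T) := fun u hu =>
    h.abs_abelPrimitive_le hg hΓ hρ₀ hρ₁ ⟨by linarith [hu.2], by linarith [hu.1]⟩
  refine le_mul_rpow_of_le_add_inv_mul (φ := fun u => |abelPrimitive S T c g ρ (y - u) -
    abelPrimitive S T c g ρ y|) hS (by positivity) (by linarith) hα₀ hα₁ (by positivity)
    (by positivity) (fun v hv => ?_) (fun v hv => ?_) (by rwa [hSy])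
  · have hsub := hbound 0 ⟨le_rfl, hy₀.le⟩
    rw [sub_zero] at hsub
    exact (abs_sub _ _).trans (by linarith [hbound v (hSy ▸ hv)])
  · exact h.abs_abelPrimitive_sub_le_add hg hΓ hρ₀ hρ₁ hv

lemma abs_abelPrimitive_peak_sub_le {α : ℝ} (hα₀ : 0 ≤ α) (hα₁ : α < 1) (hρ₀ : 0 ≤ ρ)
    (hρ₁ : ρ < 1) :
    |abelPrimitive S T c g ρ c - centeredPrimitive g c +
        ρ * T⁻¹ * abelPrimitive S T c g ρ (wShapeFixedPoint S c) -
        (1 - c) * abelDefect S T c g ρ| ≤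
      abelHolderConst S T c Γ α * peakGap S T c ^ α := by
  have hholder := h.abs_abelPrimitive_sub_le_rpow hg hΓ hα₀ hα₁ hρ₀ hρ₁
    ⟨h.peakGap_nonneg, h.peakGap_le_fixedPoint⟩
  have hT := inv_pos.2 h.right_pos
  have hρT : ρ * T⁻¹ ≤ 1 :=
    mul_le_one₀ hρ₁.le hT.le (inv_lt_one_of_one_lt₀ h.one_lt_right).le
  refine le_trans (le_of_eq ?_) ((mul_le_of_le_one_left (abs_nonneg _) hρT).trans hholder)
  rw [h.abelPrimitive_peak hg hΓ hρ₀ hρ₁, ← abs_of_nonneg (mul_nonneg hρ₀ hT.le), ← abs_mul,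
    ← abs_neg, abs_of_nonneg (mul_nonneg hρ₀ hT.le)]
  ring_nf

lemma abs_acimCoeff_mul_sub_le {ν : Measure ℝ} (hν : IsAcim (wShapeMap S T c) ν) {α : ℝ}
    (hα₀ : 0 ≤ α) (hα₁ : α < 1) :
    |acimCoeff S T c * ((∫ x, g x ∂ν) - ∫ x in (0 : ℝ)..1, g x) - (centeredPrimitive g c -
        fixedPointWeight S T * centeredPrimitive g (wShapeFixedPoint S c))| ≤
      abelHolderConst S T c Γ α * peakGap S T c ^ α := by
  set J := (∫ x, g x ∂ν) - ∫ x in (0 : ℝ)..1, g x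
  set y := wShapeFixedPoint S c
  have hB : S⁻¹ + T⁻¹ ≠ 0 := (add_pos (inv_pos.2 h.left_pos) (inv_pos.2 h.right_pos)).ne'
  have hS : 1 - 1 * S⁻¹ ≠ 0 := by
    rw [one_mul]
    exact (sub_pos.2 (inv_lt_one_of_one_lt₀ h.one_lt_left)).ne'
  have hρ : ∀ᶠ ρ : ℝ in 𝓝[<] 1, ρ ∈ Set.Ioo 0 1 := Ioo_mem_nhdsLT zero_lt_one
  have hid : Tendsto (fun ρ : ℝ => ρ) (𝓝[<] 1) (𝓝 1) := tendsto_id.mono_left nhdsWithin_le_nhds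
  have hZ : Tendsto (abelDefect S T c g) (𝓝[<] 1) (𝓝 J) := h.tendsto_abelDefect hg hΓ hν
  have hpeak : Tendsto (fun ρ => abelPrimitive S T c g ρ c) (𝓝[<] 1)
      (𝓝 (J / (1 * (S⁻¹ + T⁻¹)))) := by
    refine (hZ.div (hid.mul_const _) (by rwa [one_mul])).congr' ?_
    filter_upwards [hρ] with ρ hρ
    rw [Pi.div_apply, h.abelDefect_eq hg hΓ hρ.1.le hρ.2, ← mul_assoc,
      mul_div_cancel_left₀ _ (mul_ne_zero hρ.1.ne' hB)]
  have hfix : Tendsto (fun ρ => abelPrimitive S T c g ρ y) (𝓝[<] 1)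
      (𝓝 ((centeredPrimitive g y - y * J) / (1 - 1 * S⁻¹))) := by
    refine (((hZ.const_mul y).const_sub _).div ((hid.mul_const _).const_sub 1) hS).congr' ?_
    filter_upwards [hρ] with ρ hρ
    exact (h.abelPrimitive_fixedPoint hg hΓ hρ.1.le hρ.2).symm
  have hlim := (((hpeak.sub_const (centeredPrimitive g c)).add
    ((hid.mul_const T⁻¹).mul hfix)).sub (hZ.const_mul (1 - c))).abs
  refine le_trans (le_of_eq ?_) (le_of_tendsto hlim ?_)
  · rw [acimCoeff, fixedPointWeight]
    congr 1
    ring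
  · filter_upwards [hρ] with ρ hρ
    exact h.abs_abelPrimitive_peak_sub_le hg hΓ hα₀ hα₁ hρ.1.le hρ.2

end IsExpandingWShape

/-! ### Asymptotics of the family `W_a` -/

lemma tendsto_of_abs_mul_sub_le {ι : Type*} {l : Filter ι} {A J N E : ι → ℝ} {A' N' : ℝ}
    (hle : ∀ᶠ i in l, |A i * J i - N i| ≤ E i) (hA : Tendsto A l (𝓝 A')) (hA' : A' ≠ 0)
    (hN : Tendsto N l (𝓝 N')) (hE : Tendsto E l (𝓝 0)) : Tendsto J l (𝓝 (N' / A')) := by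
  have hprod : Tendsto (fun i => A i * J i) l (𝓝 N') := by
    simpa using (squeeze_zero_norm' hle hE).add hN
  refine (hprod.div hA hA').congr' ?_
  filter_upwards [hA.eventually_ne hA'] with i hi
  exact mul_div_cancel_left₀ _ hi

lemma tendsto_nhdsGT_of_continuousAt {f : ℝ → ℝ} {x y : ℝ} (hf : ContinuousAt f x)
    (hy : f x = y) : Tendsto f (𝓝[>] x) (𝓝 y) :=
  hy ▸ hf.tendsto.mono_left nhdsWithin_le_nhds

lemma tendsto_div_nhdsGT_of_hasDerivAt {f : ℝ → ℝ} {f' : ℝ} (hf : HasDerivAt f f' 0)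
    (hf₀ : f 0 = 0) : Tendsto (fun a => f a / a) (𝓝[>] 0) (𝓝 f') := by
  refine (hf.tendsto_slope_zero_right).congr fun a => ?_
  rw [zero_add, hf₀, sub_zero, smul_eq_mul, inv_mul_eq_div]

lemma Wmap_eq_wShapeMap (s₁ s₂ p q r a : ℝ) :
    Wmap s₁ s₂ p q r a = wShapeMap (s₁ + p * a) (s₂ + q * a) (1 / 2 + r * a) := by
  have hden : ∀ s u : ℝ, s + u * a - 2 * (1 / 2 + r * a) = s - 1 + u * a - 2 * r * a :=
    fun s u => by ring
  funext x
  rw [Wmap, wShapeMap, hden, hden]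
  congr 1
  · ring
  congr 1
  · ring
  congr 1
  · ring
  · ring

lemma measurable_Wmap (s₁ s₂ p q r a : ℝ) : Measurable (Wmap s₁ s₂ p q r a) :=
  Wmap_eq_wShapeMap s₁ s₂ p q r a ▸ measurable_wShapeMap _ _ _

section Family

variable {s₁ s₂ p q r : ℝ}

lemma eventually_isExpandingWShape (hs₁ : 1 < s₁) (hs₂ : 1 < s₂) (hr : 0 < r)
    (hK : 0 < q * s₁ + p * s₂ - p - q) (hsum : s₁ + s₂ = s₁ * s₂) :
    ∀ᶠ a in 𝓝[>] 0, IsExpandingWShape (s₁ + p * a) (s₂ + q * a) (1 / 2 + r * a) := by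
  have hs₂₀ : s₂ + q * 0 ≠ 0 := by linarith
  have hleft : ∀ᶠ a in 𝓝[>] (0 : ℝ), 2 * (1 / 2 + r * a) < s₁ + p * a :=
    nhdsWithin_le_nhds <| ContinuousAt.eventually_lt (by fun_prop) (by fun_prop) (by linarith)
  have hright : ∀ᶠ a in 𝓝[>] (0 : ℝ), 2 * (1 / 2 + r * a) < s₂ + q * a :=
    nhdsWithin_le_nhds <| ContinuousAt.eventually_lt (by fun_prop) (by fun_prop) (by linarith)
  have hpeak : ∀ᶠ a in 𝓝[>] (0 : ℝ), 1 / 2 + r * a < 1 / 2 + (1 / 2 + r * a) / (s₂ + q * a) := by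
    refine nhdsWithin_le_nhds <| ContinuousAt.eventually_lt (by fun_prop)
      (by fun_prop (disch := exact hs₂₀)) ?_
    have : 0 < s₂ := by linarith
    simp only [mul_zero, add_zero]
    exact lt_add_of_pos_right _ (by positivity)
  have hdefect : ∀ᶠ a in 𝓝[>] (0 : ℝ), 0 < q * s₁ + p * s₂ - p - q + p * q * a :=
    nhdsWithin_le_nhds <| ContinuousAt.eventually_lt (by fun_prop) (by fun_prop) (by linarith)
  filter_upwards [hleft, hright, hpeak, hdefect, self_mem_nhdsWithin] with a h₁ h₂ h₃ h₄ ha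
  have ha : 0 < a := ha
  exact ⟨by linarith [mul_pos hr ha], h₁, h₂, h₃, by nlinarith [mul_pos ha h₄]⟩

lemma hasDerivAt_wShapeFixedPoint (hs₁ : s₁ ≠ 1) (p r : ℝ) :
    HasDerivAt (fun a => wShapeFixedPoint (s₁ + p * a) (1 / 2 + r * a)) (-(r / (s₁ - 1))) 0 := by
  have hne : s₁ + p * 0 - 1 ≠ 0 := by simpa [sub_eq_zero] using hs₁
  have hne' : s₁ - 1 ≠ 0 := sub_ne_zero.2 hs₁
  have hS : HasDerivAt (fun a : ℝ => s₁ + p * a - 1) p 0 := by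
    simpa using (((hasDerivAt_id (0 : ℝ)).const_mul p).const_add s₁).sub_const 1
  have hc : HasDerivAt (fun a : ℝ => 1 / 2 + r * a - 1 / 2) r 0 := by
    simpa using (((hasDerivAt_id (0 : ℝ)).const_mul r).const_add (1 / 2)).sub_const (1 / 2)
  refine ((hc.div hS hne).const_sub (1 / 2)).congr_deriv ?_
  simp only [mul_zero, add_zero]
  field_simp
  ring

lemma hasDerivAt_inv_add_mul {s : ℝ} (hs : s ≠ 0) (p : ℝ) :
    HasDerivAt (fun a => (s + p * a)⁻¹) (-p / s ^ 2) 0 := by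
  have hS : HasDerivAt (fun a : ℝ => s + p * a) p 0 := by
    simpa using ((hasDerivAt_id (0 : ℝ)).const_mul p).const_add s
  exact (hS.fun_inv (by simpa using hs)).congr_deriv (by simp)

lemma fixedPointWeight_eq_one (hs₁ : s₁ ≠ 0) (hs₂ : s₂ ≠ 0) (hsum : s₁ + s₂ = s₁ * s₂) :
    fixedPointWeight s₁ s₂ = 1 := by
  have hinv : 1 - s₁⁻¹ = s₂⁻¹ := by
    field_simp
    linarith
  rw [fixedPointWeight, hinv, div_self (inv_ne_zero hs₂)]

lemma hasDerivAt_fixedPointWeight (hs₁ : s₁ ≠ 0) (hs₂ : s₂ ≠ 0) (hsum : s₁ + s₂ = s₁ * s₂)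
    (p q : ℝ) :
    HasDerivAt (fun a => fixedPointWeight (s₁ + p * a) (s₂ + q * a))
      (-((q * s₁ + p * s₂ - p - q) / s₁)) 0 := by
  have hinv : 1 - s₁⁻¹ = s₂⁻¹ := by
    field_simp
    linarith
  refine ((hasDerivAt_inv_add_mul hs₂ q).div ((hasDerivAt_inv_add_mul hs₁ p).const_sub 1)
    (by simpa [hinv] using hs₂)).congr_deriv ?_
  simp only [mul_zero, add_zero, hinv]
  field_simp
  grind

lemma acimCoeff_eq_zero (hs₁ : s₁ ≠ 0) (hs₂ : s₂ ≠ 0) (hsum : s₁ + s₂ = s₁ * s₂) :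
    acimCoeff s₁ s₂ (1 / 2) = 0 := by
  have hinv : s₁⁻¹ + s₂⁻¹ = 1 := by
    field_simp
    linarith
  rw [acimCoeff, hinv, fixedPointWeight_eq_one hs₁ hs₂ hsum, wShapeFixedPoint]
  norm_num

lemma hasDerivAt_acimCoeff (hs₁ : 1 < s₁) (hs₂ : 1 < s₂) (hsum : s₁ + s₂ = s₁ * s₂) (p q r : ℝ) :
    HasDerivAt (fun a => acimCoeff (s₁ + p * a) (s₂ + q * a) (1 / 2 + r * a))
      (((q * s₁ + p * s₂ - p - q) * (s₂ + 2) + 2 * r * s₁ * s₂ ^ 2) / (2 * s₁ * s₂)) 0 := by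
  have h₁ : s₁ ≠ 0 := by linarith
  have h₂ : s₂ ≠ 0 := by linarith
  have h₃ : s₁ - 1 ≠ 0 := by linarith
  have hinv : s₁⁻¹ + s₂⁻¹ = 1 := by
    field_simp
    linarith
  have hc : HasDerivAt (fun a : ℝ => 1 / 2 + r * a) r 0 := by
    simpa using ((hasDerivAt_id (0 : ℝ)).const_mul r).const_add (1 / 2)
  refine (((((hasDerivAt_inv_add_mul h₁ p).add (hasDerivAt_inv_add_mul h₂ q)).inv
    (by simp [hinv])).sub (hc.const_sub 1)).sub ((hasDerivAt_fixedPointWeight h₁ h₂ hsum p q).mul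
    (hasDerivAt_wShapeFixedPoint hs₁.ne' p r))).congr_deriv ?_
  simp only [mul_zero, add_zero, Pi.add_apply, hinv, fixedPointWeight_eq_one h₁ h₂ hsum,
    wShapeFixedPoint, sub_self, zero_div, sub_zero]
  field_simp
  grind

lemma hasDerivAt_centeredPrimitive_sub (hs₁ : 1 < s₁) (hs₂ : 1 < s₂) (hsum : s₁ + s₂ = s₁ * s₂)
    (p q r : ℝ) {g : ℝ → ℝ} {Γ : ℝ} (hg : Measurable g) (hΓ : ∀ x, |g x| ≤ Γ)
    (hcont : ContinuousAt g (1 / 2)) :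
    HasDerivAt (fun a => centeredPrimitive g (1 / 2 + r * a) -
        fixedPointWeight (s₁ + p * a) (s₂ + q * a) *
          centeredPrimitive g (wShapeFixedPoint (s₁ + p * a) (1 / 2 + r * a)))
      (r * s₂ * (g (1 / 2) - ∫ x in (0 : ℝ)..1, g x) +
        (q * s₁ + p * s₂ - p - q) / s₁ * centeredPrimitive g (1 / 2)) 0 := by
  have h₁ : s₁ ≠ 0 := by linarith
  have h₂ : s₂ ≠ 0 := by linarith
  have h₃ : s₁ - 1 ≠ 0 := by linarith
  have hc : HasDerivAt (fun a : ℝ => 1 / 2 + r * a) r 0 := by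
    simpa using ((hasDerivAt_id (0 : ℝ)).const_mul r).const_add (1 / 2)
  have hD := hasDerivAt_centeredPrimitive hg hΓ hcont
  have hDc := hD.comp_of_eq 0 hc (by simp)
  have hDy := hD.comp_of_eq 0 (hasDerivAt_wShapeFixedPoint hs₁.ne' p r)
    (by simp [wShapeFixedPoint])
  refine (hDc.sub ((hasDerivAt_fixedPointWeight h₁ h₂ hsum p q).mul hDy)).congr_deriv ?_
  simp only [Function.comp, mul_zero, add_zero, fixedPointWeight_eq_one h₁ h₂ hsum,
    wShapeFixedPoint, sub_self, zero_div, sub_zero]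
  field_simp
  grind

lemma tendsto_abelHolderConst (hs₁ : 1 < s₁) (hs₂ : 1 < s₂) (p q r Γ : ℝ) {α : ℝ} (hα : α < 1) :
    Tendsto (fun a => abelHolderConst (s₁ + p * a) (s₂ + q * a) (1 / 2 + r * a) Γ α) (𝓝[>] 0)
      (𝓝 (abelHolderConst s₁ s₂ (1 / 2) Γ α)) := by
  have hs₁₀ : 0 < s₁ := by linarith
  have hs₂₀ : 0 < s₂ := by linarith
  have hS : ContinuousAt (fun a : ℝ => s₁ + p * a) 0 := by fun_prop
  have hy : ContinuousAt (fun a => wShapeFixedPoint (s₁ + p * a) (1 / 2 + r * a)) 0 :=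
    (hasDerivAt_wShapeFixedPoint hs₁.ne' p r).continuousAt
  have hrate : ContinuousAt (fun a => wShapeRate (s₁ + p * a) (s₂ + q * a)) 0 :=
    ((hasDerivAt_inv_add_mul hs₁₀.ne' p).continuousAt.max
      (hasDerivAt_inv_add_mul hs₂₀.ne' q).continuousAt).max continuousAt_const
  have hrate_lt : wShapeRate s₁ s₂ < 1 :=
    max_lt (max_lt (inv_lt_one_of_one_lt₀ hs₁) (inv_lt_one_of_one_lt₀ hs₂)) (by norm_num)
  have hpow_lt : s₁ ^ (α - 1) < 1 := Real.rpow_lt_one_of_one_lt_of_neg hs₁ (by linarith)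
  have hy₀ : wShapeFixedPoint s₁ (1 / 2) = 1 / 2 := by simp [wShapeFixedPoint]
  refine tendsto_nhdsGT_of_continuousAt ?_ (by simp)
  refine ContinuousAt.add (ContinuousAt.div ((continuousAt_const.div
    (continuousAt_const.sub hrate) ?_).const_mul 2) ((hy.div hS ?_).rpow_const (Or.inl ?_)) ?_)
    (continuousAt_const.div (continuousAt_const.sub (hS.rpow_const (Or.inl ?_))) ?_) <;>
    simp only [mul_zero, add_zero, hy₀, Pi.div_apply, Pi.sub_apply]
  · exact (sub_pos.2 hrate_lt).ne'
  · exact hs₁₀.ne'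
  · positivity
  · positivity
  · exact hs₁₀.ne'
  · exact (sub_pos.2 hpow_lt).ne'

lemma peakGap_eq (hsum : s₁ + s₂ = s₁ * s₂) (p q r a : ℝ) :
    peakGap (s₁ + p * a) (s₂ + q * a) (1 / 2 + r * a) =
      a ^ 2 * (r * (q * s₁ + p * s₂ - p - q + p * q * a) / (s₁ + p * a - 1)) := by
  rw [peakGap, mul_div_assoc', eq_comm]
  congr 1
  linear_combination r * a * hsum

lemma tendsto_abelHolderConst_mul_peakGap_div (hs₁ : 1 < s₁) (hs₂ : 1 < s₂)
    (hsum : s₁ + s₂ = s₁ * s₂) (hr : 0 < r) (hK : 0 < q * s₁ + p * s₂ - p - q) (Γ : ℝ) {α : ℝ}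
    (hα₀ : 1 / 2 < α) (hα₁ : α < 1) :
    Tendsto (fun a => abelHolderConst (s₁ + p * a) (s₂ + q * a) (1 / 2 + r * a) Γ α *
      peakGap (s₁ + p * a) (s₂ + q * a) (1 / 2 + r * a) ^ α / a) (𝓝[>] 0) (𝓝 0) := by
  set e : ℝ → ℝ := fun a => r * (q * s₁ + p * s₂ - p - q + p * q * a) / (s₁ + p * a - 1)
  have he₀ : 0 < e 0 := by
    simp only [e, mul_zero, add_zero]
    exact div_pos (mul_pos hr hK) (sub_pos.2 hs₁)
  have he : ContinuousAt e 0 := by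
    have hne : s₁ + p * 0 - 1 ≠ 0 := by linarith
    fun_prop (disch := exact hne)
  have hpow : Tendsto (fun a : ℝ => a ^ (2 * α - 1)) (𝓝[>] 0) (𝓝 0) :=
    tendsto_nhdsGT_of_continuousAt (Real.continuousAt_rpow_const 0 _ (Or.inr (by linarith)))
      (Real.zero_rpow (by linarith))
  have hlim := ((tendsto_abelHolderConst hs₁ hs₂ p q r Γ hα₁).mul
    (tendsto_nhdsGT_of_continuousAt (he.rpow_const (p := α) (Or.inl he₀.ne')) rfl)).mul hpow
  rw [mul_zero] at hlim
  refine hlim.congr' ?_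
  filter_upwards [self_mem_nhdsWithin, nhdsWithin_le_nhds (he.eventually_const_lt he₀)]
    with a ha hea
  have ha : 0 < a := ha
  have hsq : (a ^ 2) ^ α / a = a ^ (2 * α - 1) := by
    rw [Real.rpow_sub_one ha.ne', Real.rpow_mul ha.le, Real.rpow_two]
  rw [peakGap_eq hsum, Real.mul_rpow (sq_nonneg a) hea.le, ← hsq]
  ring

lemma tendsto_integral_Wmap_acim (hs₁ : 1 < s₁) (hs₂ : 1 < s₂) (hsum : s₁ + s₂ = s₁ * s₂)
    (hr : 0 < r) (hK : 0 < q * s₁ + p * s₂ - p - q) {μ : ℝ → Measure ℝ}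
    (hμ : ∀ᶠ a in 𝓝[>] 0, IsAcim (Wmap s₁ s₂ p q r a) (μ a)) {g : ℝ → ℝ} {Γ : ℝ}
    (hg : Measurable g) (hΓ : ∀ x, |g x| ≤ Γ) (hcont : ContinuousAt g (1 / 2)) :
    Tendsto (fun a => (∫ x, g x ∂(μ a)) - ∫ x in (0 : ℝ)..1, g x) (𝓝[>] 0)
      (𝓝 ((r * s₂ * (g (1 / 2) - ∫ x in (0 : ℝ)..1, g x) +
          (q * s₁ + p * s₂ - p - q) / s₁ * centeredPrimitive g (1 / 2)) /
        (((q * s₁ + p * s₂ - p - q) * (s₂ + 2) + 2 * r * s₁ * s₂ ^ 2) / (2 * s₁ * s₂)))) := by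
  have hs₁₀ : 0 < s₁ := by linarith
  have hs₂₀ : 0 < s₂ := by linarith
  have hcoeff := tendsto_div_nhdsGT_of_hasDerivAt (hasDerivAt_acimCoeff hs₁ hs₂ hsum p q r)
    (by simpa using acimCoeff_eq_zero hs₁₀.ne' hs₂₀.ne' hsum)
  have hsource := tendsto_div_nhdsGT_of_hasDerivAt
    (hasDerivAt_centeredPrimitive_sub hs₁ hs₂ hsum p q r hg hΓ hcont)
    (by simp [fixedPointWeight_eq_one hs₁₀.ne' hs₂₀.ne' hsum, wShapeFixedPoint])
  have herror := tendsto_abelHolderConst_mul_peakGap_div hs₁ hs₂ hsum hr hK Γ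
    (α := 3 / 4) (by norm_num) (by norm_num)
  refine tendsto_of_abs_mul_sub_le ?_ hcoeff (by positivity) hsource herror
  filter_upwards [hμ, eventually_isExpandingWShape hs₁ hs₂ hr hK hsum, self_mem_nhdsWithin]
    with a hμa hshape ha
  have ha : 0 < a := ha
  rw [Wmap_eq_wShapeMap] at hμa
  rw [div_mul_eq_mul_div, ← sub_div, abs_div, abs_of_pos ha]
  gcongr
  exact hshape.abs_acimCoeff_mul_sub_le hg hΓ hμa (by norm_num) (by norm_num)

lemma setIntegral_mul_h0 (hs₁ : 0 < s₁) (hs₂ : 0 < s₂) (hsum : s₁ + s₂ = s₁ * s₂) {g : ℝ → ℝ}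
    (hg : ∀ a b, IntervalIntegrable g volume a b) :
    ∫ x in Set.Icc (0 : ℝ) 1, g x * h0 s₁ s₂ x =
      (∫ x in (0 : ℝ)..1, g x) + 2 * s₂ / (s₂ + 2) * centeredPrimitive g (1 / 2) := by
  have hden : 2 * s₁ * s₂ + s₁ - s₂ = s₁ * (s₂ + 2) := by linarith
  have hleft : ∀ x ∈ Set.Ioo (0 : ℝ) (1 / 2), g x * h0 s₁ s₂ x =
      g x * (2 * (s₂ + 1) / (s₂ + 2)) := fun x hx => by
    rw [h0, if_pos hx.2, hden]
    field_simp
  have hright : ∀ x ∈ Set.Ioo (1 / 2 : ℝ) 1, g x * h0 s₁ s₂ x = g x * (2 / (s₂ + 2)) :=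
    fun x hx => by
      rw [h0, if_neg hx.1.not_gt, hden]
      field_simp
      linear_combination -g x * hsum
  have hpiece : ∀ {u v k : ℝ}, u ≤ v → (∀ x ∈ Set.Ioo u v, g x * h0 s₁ s₂ x = g x * k) →
      IntervalIntegrable (fun x => g x * h0 s₁ s₂ x) volume u v ∧
        ∫ x in u..v, g x * h0 s₁ s₂ x = (∫ x in u..v, g x) * k := fun {u v k} huv heq => by
    have hcongr : Set.EqOn (fun x => g x * k) (fun x => g x * h0 s₁ s₂ x) (Set.uIoo u v) :=
      fun x hx => (heq x (Set.uIoo_of_le huv ▸ hx)).symm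
    refine ⟨((hg u v).mul_const k).congr_uIoo hcongr, ?_⟩
    rw [← intervalIntegral.integral_mul_const]
    exact intervalIntegral.integral_congr_Ioo_of_le huv heq
  obtain ⟨hintl, hl⟩ := hpiece (by norm_num) hleft
  obtain ⟨hintr, hr⟩ := hpiece (by norm_num) hright
  rw [integral_Icc_eq_integral_Ioc, ← intervalIntegral.integral_of_le zero_le_one,
    ← intervalIntegral.integral_add_adjacent_intervals hintl hintr, hl, hr,
    centeredPrimitive_eq hg, ← intervalIntegral.integral_add_adjacent_intervals (hg 0 (1 / 2))
    (hg (1 / 2) 1)]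
  field_simp
  ring

end Family

theorem Wmap_acim_tendsto_combination_general {s₁ s₂ p q r : ℝ} (hs₁ : 1 < s₁) (hs₂ : 1 < s₂)
    (hr : 0 < r) (hK : 0 < q * s₁ + p * s₂ - p - q) (hsum : s₁ + s₂ = s₁ * s₂)
    {μ : ℝ → Measure ℝ} (hμ : ∀ᶠ a in 𝓝[>] 0, IsAcim (Wmap s₁ s₂ p q r a) (μ a))
    {g : ℝ → ℝ} {Γ : ℝ} (hg : Measurable g) (hΓ : ∀ x ∈ Set.Icc (0 : ℝ) 1, |g x| ≤ Γ)
    (hcont : ContinuousAt g (1 / 2)) :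
    Tendsto (fun a => ∫ x, g x ∂(μ a)) (𝓝[>] 0)
      (𝓝 ((q * s₁ + p * s₂ - p - q) * (s₂ + 2) /
            ((q * s₁ + p * s₂ - p - q) * (s₂ + 2) + 2 * r * s₁ * s₂ ^ 2) *
            (∫ x in Set.Icc (0 : ℝ) 1, g x * h0 s₁ s₂ x) +
          2 * r * s₁ * s₂ ^ 2 / ((q * s₁ + p * s₂ - p - q) * (s₂ + 2) + 2 * r * s₁ * s₂ ^ 2) *
            g (1 / 2))) := by
  have hs₁₀ : 0 < s₁ := by linarith
  have hs₂₀ : 0 < s₂ := by linarith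
  set f : ℝ → ℝ := (Set.Icc (0 : ℝ) 1).indicator g
  have hf : ∀ x ∈ Set.Icc (0 : ℝ) 1, f x = g x := fun x hx => Set.indicator_of_mem hx g
  have hfΓ : ∀ x, |f x| ≤ Γ := fun x => by
    by_cases hx : x ∈ Set.Icc (0 : ℝ) 1
    · exact hf x hx ▸ hΓ x hx
    · simpa [f, hx] using (abs_nonneg _).trans (hΓ 0 ⟨le_rfl, zero_le_one⟩)
  have hfcont : ContinuousAt f (1 / 2) :=
    hcont.congr <| Filter.mem_of_superset (Icc_mem_nhds (by norm_num) (by norm_num))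
      fun x hx => (hf x hx).symm
  have hfmeas : Measurable f := hg.indicator measurableSet_Icc
  have hdensity : ∫ x in Set.Icc (0 : ℝ) 1, g x * h0 s₁ s₂ x =
      (∫ x in (0 : ℝ)..1, f x) + 2 * s₂ / (s₂ + 2) * centeredPrimitive f (1 / 2) := by
    rw [← setIntegral_mul_h0 hs₁₀ hs₂₀ hsum fun _ _ => intervalIntegrable_of_abs_le hfmeas hfΓ _ _]
    exact setIntegral_congr_fun measurableSet_Icc fun x hx => by simp only [hf x hx]
  have hlim := (tendsto_integral_Wmap_acim hs₁ hs₂ hsum hr hK hμ hfmeas hfΓ hfcont).add_const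
    (∫ x in (0 : ℝ)..1, f x)
  simp only [sub_add_cancel] at hlim
  convert hlim.congr' ?_ using 2
  · rw [hdensity, hf (1 / 2) (by norm_num)]
    generalize q * s₁ + p * s₂ - p - q = K at hK
    field_simp
    ring
  · filter_upwards [hμ] with a hμa
    refine integral_congr_ae ?_
    filter_upwards [mem_ae_iff.2 hμa.measure_compl_Icc] with x hx using hf x hx

/-- Theorem 1(II): if `1/s₁ + 1/s₂ = 1`, the acim's `μ_a` of `W_a` converge *-weakly, as
`a → 0⁺`, to the convex combination
`((qs₁+ps₂−p−q)(s₂+2)/D)·μ₀ + (2rs₁s₂²/D)·δ_{1/2}` where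
`D = (qs₁+ps₂−p−q)(s₂+2) + 2rs₁s₂²` and `μ₀` is the acim of `W₀` with density `h0`. -/
theorem Wmap_acim_tendsto_combination
    (s₁ s₂ p q r : ℝ) (hs₁ : 1 < s₁) (hs₂ : 1 < s₂)
    (hp : 0 < p) (hq : 0 < q) (hr : 0 < r)
    (hsum : 1/s₁ + 1/s₂ = 1)
    (a₁ : ℝ) (ha₁ : 0 < a₁) (μ : ℝ → Measure ℝ)
    (hμ : ∀ a, 0 < a → a < a₁ →
      Set.MapsTo (Wmap s₁ s₂ p q r a) (Set.Icc 0 1) (Set.Icc 0 1) ∧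
      IsProbabilityMeasure (μ a) ∧
      μ a ≪ volume ∧
      μ a (Set.Icc (0:ℝ) 1)ᶜ = 0 ∧
      (∀ A : Set ℝ, MeasurableSet A → μ a (Wmap s₁ s₂ p q r a ⁻¹' A) = μ a A)) :
    ∀ g : ℝ → ℝ, Continuous g →
      Tendsto (fun a => ∫ x, g x ∂(μ a)) (𝓝[>] (0:ℝ))
        (𝓝 ((q*s₁+p*s₂-p-q)*(s₂+2) / ((q*s₁+p*s₂-p-q)*(s₂+2) + 2*r*s₁*s₂^2) *
              (∫ x in Set.Icc (0:ℝ) 1, g x * h0 s₁ s₂ x) +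
            2*r*s₁*s₂^2 / ((q*s₁+p*s₂-p-q)*(s₂+2) + 2*r*s₁*s₂^2) * g (1/2))) := by
  intro g hg
  obtain ⟨Γ, hΓ⟩ := isCompact_Icc.exists_bound_of_continuousOn hg.continuousOn
  have hmul : s₁ + s₂ = s₁ * s₂ :=
    (Real.holderConjugate_iff.2 ⟨hs₁, by simpa using hsum⟩).mul_eq_add.symm
  refine Wmap_acim_tendsto_combination_general hs₁ hs₂ hr (by nlinarith) hmul ?_ hg.measurable
    hΓ hg.continuousAt
  filter_upwards [Ioo_mem_nhdsGT ha₁] with a ha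
  obtain ⟨-, hprob, hac, hsupp, hinv⟩ := hμ a ha.1 ha.2
  have hmeas := measurable_Wmap s₁ s₂ p q r a
  exact ⟨hprob, hac, hsupp, hmeas,
    Measure.ext fun A hA => (Measure.map_apply hmeas hA).trans (hinv A hA)⟩
end
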